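/- Let K be a field containing ℚ(√−7), and let G be an unsolvable transitive subgroup of S_8 with G ≠ A_8, G ≠ S_8, and G not isomorphic to PGL(2,7). Then the fixed field K(x_1,…,x_8)^G is K-rational. -/

import Mathlib

/-! Write `L = K(x₁, …, x₈)`. The group `PSL(2,7)` has a three-dimensional representation over
`ℚ(√-7)`. By Galois descent there is an equivariant vector `v` in `L³` whose ratios `v 0 / v 2` and
`v 1 / v 2` generate `L` together with the ratios of differences of the variables. Klein's
invariants of degrees 4, 6 and 14 give two invariant functions over which the ratios of `v` have
degree at most `168 = 7·3·2·2·2`. Again by descent, the span of the differences over the field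
generated by the ratios of `v` has an invariant basis `w₀, …, w₆`. So `L` has degree at most
`168 = |G|` over the field generated by the two functions and the six ratios `wᵢ / wⱼ`, `j` fixed,
which is therefore the fixed field. As `L` has transcendence degree 8, these eight generators are
algebraically independent. For `AGL(3,2) = 2³ ⋊ PSL(2,7)`, the differences are replaced by the
products of Walsh transforms over the lines of the Fano plane, which are invariant under
translations; this costs a factor 8 in the degree.

An unsolvable transitive `G` is primitive, so by Jordan's theorem it contains no three-cycle unless
it contains `A₈`. In the absence of three-cycles, 9 does not divide `|G|`, and 7 does. Up to
conjugation `G` then contains a given 7-cycle, hence is 2-transitive and generated by this cycle and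
the elements exchanging `0` and `1`. Forbidding three-cycles leaves few possibilities for these
elements, and `G` is conjugate to `PSL(2,7)`, `AGL(3,2)` or `PGL(2,7)`. -/

noncomputable section

/-- The rational function field `K(x_i : i ∈ I)` over `K`, realized as the fraction field
of the multivariate polynomial ring. -/
abbrev RFF (K : Type) [Field K] (I : Type) := FractionRing (MvPolynomial I K)

/-- The image of the variable `x_i` in the rational function field `K(x_i : i ∈ I)`. -/
noncomputable def Xvar (K : Type) [Field K] (I : Type) (i : I) : RFF K I :=
  algebraMap (MvPolynomial I K) (RFF K I) (MvPolynomial.X i)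

/-- Permutations of the variables as `K`-algebra automorphisms of the polynomial ring. -/
def renameHom (K : Type) [Field K] (I : Type) :
    Equiv.Perm I →* (MvPolynomial I K ≃ₐ[K] MvPolynomial I K) where
  toFun σ := MvPolynomial.renameEquiv K σ
  map_one' := MvPolynomial.renameEquiv_refl K
  map_mul' σ τ := (MvPolynomial.renameEquiv_trans K τ σ).symm

/-- The action of permutations of the variables on `K(x_i : i ∈ I)` by `K`-automorphisms,
determined by `σ(x_i) = x_{σ(i)}`. -/
noncomputable def permHom (K : Type) [Field K] (I : Type) :
    Equiv.Perm I →* (RFF K I ≃ₐ[K] RFF K I) :=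
  (IsFractionRing.fieldEquivOfAlgEquivHom K (RFF K I)).comp (renameHom K I)

/-- The fixed field `K(x_i : i ∈ I)^G` of a group `G` of permutations of the variables. -/
noncomputable def fixedSub (K : Type) [Field K] (I : Type) (G : Subgroup (Equiv.Perm I)) :
    IntermediateField K (RFF K I) :=
  IntermediateField.fixedField (G.map (permHom K I))

/-- An extension `L/K` is `K`-rational if it is purely transcendental over `K`, i.e. generated
by finitely many algebraically independent elements. -/
def IsRatExt (K : Type) [Field K] (L : Type*) [Field L] [Algebra K L] : Prop :=
  ∃ (n : ℕ) (t : Fin n → L), AlgebraicIndependent K t ∧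
    IntermediateField.adjoin K (Set.range t) = ⊤

/-- The projective general linear group `PGL(2,7)`, the quotient of `GL(2,𝔽₇)` by its center. -/
abbrev PGL27 : Type :=
  Matrix.GeneralLinearGroup (Fin 2) (ZMod 7) ⧸
    Subgroup.center (Matrix.GeneralLinearGroup (Fin 2) (ZMod 7))

/-! ### Galois descent and degrees -/

section Descent

theorem exists_fun_fin_span_eq {F M : Type*} [Field F] [AddCommGroup M] [Module F M] {n : ℕ}
    {s : Set M} (hzero : 0 ∈ s) [FiniteDimensional F (Submodule.span F s)]
    (hn : Module.finrank F (Submodule.span F s) ≤ n) :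
    ∃ w : Fin n → M, (∀ k, w k ∈ s) ∧
      Submodule.span F (Set.range w) = Submodule.span F s := by
  obtain ⟨e, he, hspan, -⟩ := Submodule.exists_fun_fin_finrank_span_eq F s
  have hinj := Fin.castLE_injective hn
  have hws (k : Fin n) : Function.extend (Fin.castLE hn) e 0 k ∈ s := by
    by_cases hk : ∃ i, Fin.castLE hn i = k
    · obtain ⟨i, rfl⟩ := hk
      rw [hinj.extend_apply]
      exact he i
    · rwa [Function.extend_apply' _ _ _ hk]
  refine ⟨Function.extend (Fin.castLE hn) e 0, hws, le_antisymm ?_ ?_⟩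
  · exact Submodule.span_mono (Set.range_subset_iff.mpr hws)
  · refine hspan.ge.trans (Submodule.span_mono ?_)
    rintro _ ⟨i, rfl⟩
    exact ⟨_, hinj.extend_apply ..⟩

variable {Γ : Type*} [Group Γ] [Finite Γ]

/-- Galois descent for a semilinear action `ψ` on a vector space. A functional vanishing on the
invariants kills every trace `∑ g, ψ g (a • m)`, and then every term of it because the characters
`φ g` are linearly independent. -/
theorem span_fixedPoints_eq {F M : Type*} [Field F] [AddCommGroup M] [Module F M]
    (φ : Γ →* (F →+* F)) (hφ : Function.Injective φ) (ψ : Γ →* AddMonoid.End M)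
    (hψ : ∀ g a m, ψ g (a • m) = φ g a • ψ g m) (N : Submodule F M)
    (hN : ∀ g, ∀ m ∈ N, ψ g m ∈ N) :
    Submodule.span F {m | m ∈ N ∧ ∀ g, ψ g m = m} = N := by
  have := Fintype.ofFinite Γ
  refine le_antisymm (Submodule.span_le.mpr fun m hm => hm.1) fun m hm => ?_
  by_contra hmem
  obtain ⟨f, hfm, hf⟩ := Submodule.exists_le_ker_of_notMem hmem
  have htrace (a : F) : ∑ g, f (ψ g m) * φ g a = 0 := by
    have hfix (h : Γ) : ψ h (∑ g, ψ g (a • m)) = ∑ g, ψ g (a • m) := by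
      rw [map_sum]
      exact Fintype.sum_equiv (Equiv.mulLeft h) _ _ fun g => by simp [map_mul]
    have := hf (Submodule.subset_span
      ⟨sum_mem fun g _ => hN g _ (N.smul_mem a hm), hfix⟩)
    simpa [hψ, mul_comm] using this
  have hinj : Function.Injective fun g => (φ g : F →* F) := fun g h hgh =>
    hφ (RingHom.coe_monoidHom_injective hgh)
  have hind := (linearIndependent_monoidHom F F).comp _ hinj
  rw [Fintype.linearIndependent_iff] at hind
  exact hfm (by simpa using hind (fun g => f (ψ g m)) (funext fun a => by simpa using htrace a) 1)

theorem hilbert90_matrix {F : Type*} [Field F] {n : ℕ} (φ : Γ →* (F →+* F))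
    (hφ : Function.Injective φ) (A : Γ → Matrix (Fin n) (Fin n) F) (hone : A 1 = 1)
    (hmul : ∀ g h, A (g * h) = A g * (A h).map (φ g)) :
    ∃ E : Matrix (Fin n) (Fin n) F, IsUnit E ∧ ∀ g, A g * E.map (φ g) = E := by
  let ψ : Γ →* AddMonoid.End (Fin n → F) :=
    { toFun g := AddMonoidHom.mk' (fun v => (A g).mulVec (φ g ∘ v)) fun u v => by
        rw [← Matrix.mulVec_add]; congr 1; ext; simp
      map_one' := AddMonoidHom.ext fun v => by
        change (A 1).mulVec (φ 1 ∘ v) = v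
        rw [hone, Matrix.one_mulVec, map_one]; rfl
      map_mul' g h := AddMonoidHom.ext fun v => by
        change (A (g * h)).mulVec (φ (g * h) ∘ v) =
          (A g).mulVec (φ g ∘ (A h).mulVec (φ h ∘ v))
        rw [hmul, ← Matrix.mulVec_mulVec, map_mul]
        exact congrArg _ (funext fun i => ((φ g).map_mulVec _ _ i).symm) }
  have hspan := span_fixedPoints_eq φ hφ ψ (fun g a v => by
    change (A g).mulVec (φ g ∘ (a • v)) = φ g a • (A g).mulVec (φ g ∘ v)
    rw [← Matrix.mulVec_smul]; congr 1; ext; simp) ⊤ (fun _ _ _ => trivial)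
  obtain ⟨e, he, -, hind⟩ := Submodule.exists_fun_fin_finrank_span_eq F
    {m | m ∈ (⊤ : Submodule F (Fin n → F)) ∧ ∀ g, ψ g m = m}
  have hd : Module.finrank F (Submodule.span F
      {m | m ∈ (⊤ : Submodule F (Fin n → F)) ∧ ∀ g, ψ g m = m}) = n := by
    rw [hspan, finrank_top, Module.finrank_fin_fun]
  let e' : Fin n → Fin n → F := fun j => e (Fin.cast hd.symm j)
  refine ⟨(Matrix.of e').transpose, ?_, fun g => ?_⟩
  · exact Matrix.linearIndependent_cols_iff_isUnit.mp
      (hind.comp _ (finCongr hd.symm).injective)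
  · ext i j
    exact congrFun ((he (Fin.cast hd.symm j)).2 g) i

variable {K L : Type*} [Field K] [Field L] [Algebra K L]

/-- The restriction to a stable intermediate field of an action on the big field. -/
def restrictAction (act : Γ →* (L ≃ₐ[K] L)) (F : IntermediateField K L)
    (hF : ∀ g, ∀ x ∈ F, act g x ∈ F) : Γ →* (F →+* F) where
  toFun g := (act g : L →+* L).restrict F F (hF g)
  map_one' := RingHom.ext fun x => Subtype.ext <| by simp
  map_mul' g h := RingHom.ext fun x => Subtype.ext <| by simp; rfl

omit [Finite Γ] in
theorem restrictAction_injective (act : Γ →* (L ≃ₐ[K] L)) (F : IntermediateField K L)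
    (hF : ∀ g, ∀ x ∈ F, act g x ∈ F) (hfaithful : ∀ g, (∀ x ∈ F, act g x = x) → g = 1) :
    Function.Injective (restrictAction act F hF) :=
  (injective_iff_map_eq_one _).mpr fun g hg => hfaithful g fun x hx =>
    congrArg Subtype.val (DFunLike.congr_fun hg ⟨x, hx⟩ : _ = (⟨x, hx⟩ : F))

theorem exists_fixed_span_eq (act : Γ →* (L ≃ₐ[K] L)) (F : IntermediateField K L)
    (hF : ∀ g, ∀ x ∈ F, act g x ∈ F) (hfaithful : ∀ g, (∀ x ∈ F, act g x = x) → g = 1)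
    {n : ℕ} (y : Fin n → L) (hy : ∀ g k, act g (y k) ∈ Submodule.span F (Set.range y)) :
    ∃ w : Fin n → L, (∀ g k, act g (w k) = w k) ∧
      Submodule.span F (Set.range w) = Submodule.span F (Set.range y) := by
  let ψ : Γ →* AddMonoid.End L :=
    { toFun g := (act g : L →+ L)
      map_one' := AddMonoidHom.ext fun x => by rw [map_one]; rfl
      map_mul' g h := AddMonoidHom.ext fun x => by rw [map_mul]; rfl }
  have hψ (g : Γ) (a : F) (m : L) : ψ g (a • m) = restrictAction act F hF g a • ψ g m :=
    map_mul (act g) (a : L) m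
  have hN (g : Γ) (m : L) (hm : m ∈ Submodule.span F (Set.range y)) :
      ψ g m ∈ Submodule.span F (Set.range y) := by
    induction hm using Submodule.span_induction with
    | mem x hx => obtain ⟨k, rfl⟩ := hx; exact hy g k
    | zero => simp
    | add u v _ _ hu hv => rw [map_add]; exact add_mem hu hv
    | smul a u _ hu => rw [hψ]; exact Submodule.smul_mem _ _ hu
  have hspan := span_fixedPoints_eq _ (restrictAction_injective act F hF hfaithful) ψ hψ _ hN
  have : FiniteDimensional F (Submodule.span F (Set.range y)) :=
    FiniteDimensional.span_of_finite F (Set.finite_range y)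
  rw [← hspan] at this
  obtain ⟨w, hw, hwspan⟩ := exists_fun_fin_span_eq (F := F) (n := n) (M := L)
    (s := {m | m ∈ Submodule.span F (Set.range y) ∧ ∀ g, ψ g m = m})
    ⟨zero_mem _, fun g => map_zero _⟩ (by
      rw [hspan]; exact (finrank_range_le_card y).trans_eq (Fintype.card_fin n))
  exact ⟨w, fun g k => (hw k).2 g, hwspan.trans hspan⟩

end Descent

section Degree

variable {K L : Type*} [Field K] [Field L] [Algebra K L]

open Polynomial IntermediateField in
theorem rank_le_natDegree_mul (F : IntermediateField K L) {t : L} {p : F[X]} (hp : p ≠ 0)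
    (ht : aeval t p = 0) {n : ℕ}
    (hn : ∀ E : IntermediateField K L, F ≤ E → t ∈ E → Module.rank E L ≤ n) :
    Module.rank F L ≤ (p.natDegree * n : ℕ) := by
  have hint : IsIntegral F t := IsAlgebraic.isIntegral ⟨p, hp, ht⟩
  have : FiniteDimensional F F⟮t⟯ := adjoin.finiteDimensional hint
  have hdeg : Module.finrank F F⟮t⟯ ≤ p.natDegree := by
    rw [adjoin.finrank hint]
    exact natDegree_le_of_dvd (minpoly.dvd F t ht) hp
  have hF : F ≤ F⟮t⟯.restrictScalars K := fun x hx => F⟮t⟯.algebraMap_mem ⟨x, hx⟩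
  have : Module.Free F F⟮t⟯ := Module.Free.of_divisionRing _ _
  have : Module.Free F⟮t⟯ L := Module.Free.of_divisionRing _ _
  rw [← rank_mul_rank F F⟮t⟯ L, ← Module.finrank_eq_rank, Nat.cast_mul]
  exact mul_le_mul' (mod_cast hdeg) (hn _ hF (mem_adjoin_simple_self F t))

open Polynomial in
theorem rank_le_two_mul_of_sq_mem (F : IntermediateField K L) {t : L} (ht : t ^ 2 ∈ F) {n : ℕ}
    (hn : ∀ E : IntermediateField K L, F ≤ E → t ∈ E → Module.rank E L ≤ n) :
    Module.rank F L ≤ (2 * n : ℕ) := by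
  have hdeg := natDegree_X_pow_sub_C (n := 2) (r := (⟨t ^ 2, ht⟩ : F))
  rw [← hdeg]
  refine rank_le_natDegree_mul F (t := t) (ne_zero_of_natDegree_gt (n := 0) (by omega)) ?_ hn
  simp

theorem div_mem_of_mem_span {F B : IntermediateField K L} (hFB : F ≤ B) {ι : Type*} {v : ι → L}
    {c : L} (hv : ∀ k, v k / c ∈ B) {s : L} (hs : s ∈ Submodule.span F (Set.range v)) :
    s / c ∈ B := by
  induction hs using Submodule.span_induction with
  | mem x hx => obtain ⟨k, rfl⟩ := hx; exact hv k
  | zero => simp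
  | add x y _ _ hx hy => rw [add_div]; exact add_mem hx hy
  | smul a x _ hx =>
    rw [Algebra.smul_def, mul_div_assoc]
    exact mul_mem (hFB a.2) hx

theorem map_mem_of_mem_adjoin {S : Set L} {F : IntermediateField K L} (f : L ≃ₐ[K] L)
    (h : ∀ s ∈ S, f s ∈ F) : ∀ x ∈ IntermediateField.adjoin K S, f x ∈ F :=
  (IntermediateField.adjoin_le_iff.mpr h : _ ≤ F.comap f.toAlgHom)

theorem map_eq_self_of_mem_adjoin {S : Set L} (f : L ≃ₐ[K] L) (h : ∀ s ∈ S, f s = s) :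
    ∀ x ∈ IntermediateField.adjoin K S, f x = x := fun x hx => by
  induction hx using IntermediateField.adjoin_induction with
  | mem x hx => exact h x hx
  | algebraMap a => exact f.commutes a
  | add x y _ _ hx hy => rw [map_add, hx, hy]
  | inv x _ hx => rw [map_inv₀, hx]
  | mul x y _ _ hx hy => rw [map_mul, hx, hy]

theorem algebraicIndependent_of_isAlgebraic {n : ℕ} (x : Fin n → L)
    (halg : Algebra.IsAlgebraic (IntermediateField.adjoin K (Set.range x)) L)
    (hn : (n : Cardinal) ≤ Algebra.trdeg K L) : AlgebraicIndependent K x := by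
  open scoped IntermediateField.algebraAdjoinAdjoin in
  have : Algebra.IsAlgebraic (Algebra.adjoin K (Set.range x)) L :=
    Algebra.IsAlgebraic.trans _ (IntermediateField.adjoin K (Set.range x)) L
  exact (Algebra.IsAlgebraic.isTranscendenceBasis_of_lift_le_trdeg_of_finite K x
    (by simpa using hn)).1

end Degree

section RationalFunctionField

variable {K : Type} [Field K] {I : Type}

theorem permHom_Xvar (σ : Equiv.Perm I) (i : I) :
    permHom K I σ (Xvar K I i) = Xvar K I (σ i) := by
  simp [permHom, Xvar, renameHom]

theorem Xvar_injective : Function.Injective (Xvar K I) :=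
  (IsFractionRing.injective (MvPolynomial I K) (RFF K I)).comp MvPolynomial.X_injective

theorem permHom_injective : Function.Injective (permHom K I) := fun σ τ h =>
  Equiv.ext fun i => Xvar_injective (K := K) <| by rw [← permHom_Xvar, ← permHom_Xvar, h]

theorem mem_fixedSub {G : Subgroup (Equiv.Perm I)} {x : RFF K I} :
    x ∈ fixedSub K I G ↔ ∀ g ∈ G, permHom K I g x = x := by
  simp [fixedSub]

theorem adjoin_range_Xvar : IntermediateField.adjoin K (Set.range (Xvar K I)) = ⊤ := by
  refine eq_top_iff.mpr fun x _ => ?_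
  have hpoly (p : MvPolynomial I K) :
      algebraMap _ (RFF K I) p ∈ IntermediateField.adjoin K (Set.range (Xvar K I)) := by
    induction p using MvPolynomial.induction_on with
    | C a => exact IntermediateField.algebraMap_mem _ a
    | add p q hp hq => rw [map_add]; exact add_mem hp hq
    | mul_X p i hp =>
      rw [map_mul]
      exact mul_mem hp (IntermediateField.subset_adjoin _ _ ⟨i, rfl⟩)
  obtain ⟨a, b, -, rfl⟩ := IsFractionRing.div_surjective (A := MvPolynomial I K) x
  exact div_mem (hpoly a) (hpoly b)

theorem trdeg_RFF (n : ℕ) : Algebra.trdeg K (RFF K (Fin n)) = n := by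
  have : Algebra.IsAlgebraic (MvPolynomial (Fin n) K) (RFF K (Fin n)) :=
    IsLocalization.isAlgebraic _ (nonZeroDivisors (MvPolynomial (Fin n) K))
  rw [← ((IsTranscendenceBasis.mvPolynomial (Fin n) K).algebraMap_comp
    (A := RFF K (Fin n))).cardinalMk_eq_trdeg]
  simp

theorem finrank_fixedSub [Finite I] (G : Subgroup (Equiv.Perm I)) :
    Module.finrank (fixedSub K I G) (RFF K I) = Nat.card G := by
  let e : G ≃ G.map (permHom K I) := (G.equivMapOfInjective _ permHom_injective).toEquiv
  have := Finite.of_equiv G e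
  have := Fintype.ofFinite (G.map (permHom K I))
  rw [Nat.card_congr e, Nat.card_eq_fintype_card]
  exact FixedPoints.finrank_eq_card (G.map (permHom K I)) (RFF K I)

theorem isRatExt_fixedSub_of_rank_le {n : ℕ} {G : Subgroup (Equiv.Perm (Fin n))}
    {t : Fin n → RFF K (Fin n)} (ht : ∀ i, t i ∈ fixedSub K (Fin n) G)
    (hrank : Module.rank (IntermediateField.adjoin K (Set.range t)) (RFF K (Fin n)) ≤ Nat.card G) :
    IsRatExt K (fixedSub K (Fin n) G) := by
  have : FiniteDimensional (IntermediateField.adjoin K (Set.range t)) (RFF K (Fin n)) :=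
    Module.rank_lt_aleph0_iff.mp (hrank.trans_lt Cardinal.natCast_lt_aleph0)
  have hadjoin : IntermediateField.adjoin K (Set.range t) = fixedSub K (Fin n) G := by
    refine IntermediateField.eq_of_le_of_finrank_le'
      (IntermediateField.adjoin_le_iff.mpr (Set.range_subset_iff.mpr ht)) ?_
    rw [finrank_fixedSub]
    exact Module.finrank_le_of_rank_le hrank
  have hind := algebraicIndependent_of_isAlgebraic t inferInstance (trdeg_RFF n).ge
  refine ⟨n, fun i => ⟨t i, ht i⟩, hind.of_comp (fixedSub K (Fin n) G).val, ?_⟩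
  apply IntermediateField.map_injective (fixedSub K (Fin n) G).val
  rw [IntermediateField.adjoin_map, ← Set.range_comp, ← AlgHom.fieldRange_eq_map,
    IntermediateField.fieldRange_val]
  exact hadjoin

theorem IsRatExt.of_algEquiv {L L' : Type*} [Field L] [Field L'] [Algebra K L] [Algebra K L']
    (e : L ≃ₐ[K] L') (h : IsRatExt K L) : IsRatExt K L' := by
  obtain ⟨n, t, hind, htop⟩ := h
  refine ⟨n, e ∘ t, hind.map' (f := e.toAlgHom) e.injective, ?_⟩
  rw [Set.range_comp]
  exact (IntermediateField.adjoin_map K (Set.range t) e.toAlgHom).symm.trans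
    (by rw [htop, ← AlgHom.fieldRange_eq_map]; exact AlgEquiv.fieldRange_eq_top e)

theorem map_fixedSub (G : Subgroup (Equiv.Perm I)) (τ : Equiv.Perm I) :
    (fixedSub K I G).map (permHom K I τ : RFF K I →ₐ[K] RFF K I) =
      fixedSub K I (G.map (MulAut.conj τ).toMonoidHom) := by
  have hconj (g : Equiv.Perm I) (x : RFF K I) :
      permHom K I (τ * g * τ⁻¹) (permHom K I τ x) = permHom K I τ (permHom K I g x) := by
    simp_rw [map_mul, map_inv, AlgEquiv.mul_apply, AlgEquiv.aut_inv, AlgEquiv.symm_apply_apply]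
  ext x
  obtain ⟨x, rfl⟩ := (permHom K I τ).surjective x
  rw [mem_fixedSub]
  constructor
  · rintro ⟨y, hy, hyx⟩ _ ⟨g, hg, rfl⟩
    obtain rfl := (permHom K I τ).injective hyx
    exact (hconj g y).trans (congrArg _ (mem_fixedSub.mp hy g hg))
  · refine fun hx => ⟨x, mem_fixedSub.mpr fun g hg => (permHom K I τ).injective ?_, rfl⟩
    exact (hconj g x).symm.trans (hx _ ⟨g, hg, rfl⟩)

theorem isRatExt_fixedSub_map_conj {G : Subgroup (Equiv.Perm I)} (τ : Equiv.Perm I)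
    (h : IsRatExt K (fixedSub K I G)) :
    IsRatExt K (fixedSub K I (G.map (MulAut.conj τ).toMonoidHom)) := by
  rw [← map_fixedSub]
  exact h.of_algEquiv ((fixedSub K I G).equivMap _)

end RationalFunctionField

/-! ### Klein's invariants -/

section KleinInvariants

section CommRing

variable {R : Type*} [CommRing R]

/-- The first elementary symmetric polynomial in the squares of the coordinates; all invariants
below are polynomials in `sqEsymm₁`, `sqEsymm₂` and `sqEsymm₃`. -/
def sqEsymm₁ (v : Fin 3 → R) : R := v 0 ^ 2 + v 1 ^ 2 + v 2 ^ 2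

/-- The second elementary symmetric polynomial in the squares of the coordinates. -/
def sqEsymm₂ (v : Fin 3 → R) : R :=
  v 0 ^ 2 * v 1 ^ 2 + v 1 ^ 2 * v 2 ^ 2 + v 2 ^ 2 * v 0 ^ 2

/-- The third elementary symmetric polynomial in the squares of the coordinates. -/
def sqEsymm₃ (v : Fin 3 → R) : R := v 0 ^ 2 * v 1 ^ 2 * v 2 ^ 2

/-- The equation of Klein's quartic curve in coordinates in which a subgroup `S₄` of its
automorphism group `PSL(2,7)` acts by signed permutation matrices. Here and below `α` stands
for `(1 + √-7) / 2`, a root of `X² - X + 2`. -/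
def kleinQuartic (α : R) (v : Fin 3 → R) : R :=
  sqEsymm₁ v ^ 2 + (-2 - 3 * α) * sqEsymm₂ v

/-- Klein's sextic invariant, the Hessian of `kleinQuartic` up to a scalar. -/
def kleinSextic (α : R) (v : Fin 3 → R) : R :=
  2 * sqEsymm₁ v ^ 3 + (-6 + 5 * α) * sqEsymm₁ v * sqEsymm₂ v + (-14 - 35 * α) * sqEsymm₃ v

/-- Klein's invariant of degree 14 as a polynomial in `s = sqEsymm₁ v` and in the values `f₄`
and `f₆` of the quartic and the sextic. The orbit of `sqEsymm₁` under `PSL(2,7)` consists of the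
seven roots of `X ↦ klein14Of α X f₄ f₆ - klein14 α v`. -/
def klein14Of (α s f₄ f₆ : R) : R :=
  4096 * s ^ 7 - 3584 * α * f₄ * s ^ 5 + (-1792 + 896 * α) * f₆ * s ^ 4 +
    (-2016 + 1232 * α) * f₄ ^ 2 * s ^ 3 + (560 + 504 * α) * f₄ * f₆ * s ^ 2 +
    ((42 - 119 * α) * f₆ ^ 2 + (280 + 28 * α) * f₄ ^ 3) * s

/-- Klein's invariant of degree 14. -/
def klein14 (α : R) (v : Fin 3 → R) : R :=
  klein14Of α (sqEsymm₁ v) (kleinQuartic α v) (kleinSextic α v)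

section Map

variable {S : Type*} [CommRing S] (f : R →+* S) (α : R) (v : Fin 3 → R)

theorem map_kleinQuartic : f (kleinQuartic α v) = kleinQuartic (f α) (f ∘ v) := by
  simp [kleinQuartic, sqEsymm₁, sqEsymm₂, map_ofNat f]

theorem map_kleinSextic : f (kleinSextic α v) = kleinSextic (f α) (f ∘ v) := by
  simp [kleinSextic, sqEsymm₁, sqEsymm₂, sqEsymm₃, map_ofNat f]

theorem map_klein14Of (s f₄ f₆ : R) :
    f (klein14Of α s f₄ f₆) = klein14Of (f α) (f s) (f f₄) (f f₆) := by
  simp [klein14Of, map_ofNat f]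

theorem map_klein14 : f (klein14 α v) = klein14 (f α) (f ∘ v) := by
  rw [klein14, map_klein14Of, map_kleinQuartic, map_kleinSextic, klein14]
  simp [sqEsymm₁]

end Map

/-- The matrices preserving Klein's invariants of degrees 4, 6 and 14. -/
def kleinStabilizer (α : R) : Submonoid (Matrix (Fin 3) (Fin 3) R) where
  carrier := {M | ∀ v, kleinQuartic α (M.mulVec v) = kleinQuartic α v ∧
    kleinSextic α (M.mulVec v) = kleinSextic α v ∧ klein14 α (M.mulVec v) = klein14 α v}
  one_mem' v := by simp
  mul_mem' {M N} hM hN v := by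
    obtain ⟨h4, h6, h14⟩ := hM (N.mulVec v)
    rw [Matrix.mulVec_mulVec] at h4 h6 h14
    exact ⟨h4.trans (hN v).1, h6.trans (hN v).2.1, h14.trans (hN v).2.2⟩

/-- An element of order 3 of `PSL(2,7)` in its three-dimensional representation. -/
def kleinCyclic : Matrix (Fin 3) (Fin 3) R := !![0, 0, 1; 1, 0, 0; 0, 1, 0]

/-- An element of order 4 of `PSL(2,7)` in its three-dimensional representation. -/
def kleinSigned : Matrix (Fin 3) (Fin 3) R := !![1, 0, 0; 0, 0, -1; 0, 1, 0]

/-- Twice an involution of `PSL(2,7)` in its three-dimensional representation. -/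
def kleinDouble (α : R) : Matrix (Fin 3) (Fin 3) R :=
  !![-1, 1, 1 - α; 1, -1, 1 - α; α, α, 0]

theorem mem_kleinStabilizer_of_sqEsymm_eq {α : R} {M : Matrix (Fin 3) (Fin 3) R}
    (h₁ : ∀ v, sqEsymm₁ (M.mulVec v) = sqEsymm₁ v) (h₂ : ∀ v, sqEsymm₂ (M.mulVec v) = sqEsymm₂ v)
    (h₃ : ∀ v, sqEsymm₃ (M.mulVec v) = sqEsymm₃ v) : M ∈ kleinStabilizer α := fun v => by
  simp only [klein14, kleinQuartic, kleinSextic, h₁, h₂, h₃, and_self]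

theorem kleinCyclic_mem_kleinStabilizer (α : R) : kleinCyclic ∈ kleinStabilizer α := by
  apply mem_kleinStabilizer_of_sqEsymm_eq <;> intro v <;>
    simp [kleinCyclic, sqEsymm₁, sqEsymm₂, sqEsymm₃, Matrix.mulVec_eq_sum, Fin.sum_univ_three] <;>
    ring

theorem kleinSigned_mem_kleinStabilizer (α : R) : kleinSigned ∈ kleinStabilizer α := by
  apply mem_kleinStabilizer_of_sqEsymm_eq <;> intro v <;>
    simp [kleinSigned, sqEsymm₁, sqEsymm₂, sqEsymm₃, Matrix.mulVec_eq_sum, Fin.sum_univ_three] <;>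
    ring

theorem kleinDouble_mulVec (α : R) (v : Fin 3 → R) :
    (kleinDouble α).mulVec v =
      ![-v 0 + v 1 + (1 - α) * v 2, v 0 - v 1 + (1 - α) * v 2, α * v 0 + α * v 1] := by
  ext i
  fin_cases i <;> simp [kleinDouble, Matrix.mulVec_eq_sum, Fin.sum_univ_three] <;> ring

theorem kleinQuartic_kleinDouble_mulVec {α : R} (hα : α ^ 2 = α - 2) (v : Fin 3 → R) :
    kleinQuartic α ((kleinDouble α).mulVec v) = 16 * kleinQuartic α v := by
  simp only [kleinDouble_mulVec, kleinQuartic, sqEsymm₁, sqEsymm₂, Matrix.cons_val]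
  grind

theorem kleinSextic_kleinDouble_mulVec {α : R} (hα : α ^ 2 = α - 2) (v : Fin 3 → R) :
    kleinSextic α ((kleinDouble α).mulVec v) = 64 * kleinSextic α v := by
  simp only [kleinDouble_mulVec, kleinSextic, sqEsymm₁, sqEsymm₂, sqEsymm₃, Matrix.cons_val]
  grind

set_option maxRecDepth 100000 in
/-- The variables are `P = ((x + y) / 2)²`, `Q = ((x - y) / 2)²` and `Z = z²`. -/
theorem klein14Of_eq_of_quadratic {α P Q Z s s' f₄ f₆ : R} (hα : α ^ 2 = α - 2)
    (hs' : s' = 8 * Q - 2 * (1 + α) * Z + 4 * (α - 2) * P) (hs : s = 2 * (P + Q) + Z)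
    (hf₄ : f₄ = s ^ 2 + (-2 - 3 * α) * ((P - Q) ^ 2 + 2 * Z * (P + Q)))
    (hf₆ : f₆ = 2 * s ^ 3 + (-6 + 5 * α) * s * ((P - Q) ^ 2 + 2 * Z * (P + Q)) +
      (-14 - 35 * α) * ((P - Q) ^ 2 * Z)) :
    klein14Of α s' (16 * f₄) (64 * f₆) = 16384 * klein14Of α s f₄ f₆ := by
  simp only [klein14Of]
  subst hs' hs hf₄ hf₆
  grind

end CommRing

section Field

variable {L : Type*} [Field L] [CharZero L] {α : L}

theorem klein14_kleinDouble_mulVec (hα : α ^ 2 = α - 2) (v : Fin 3 → L) :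
    klein14 α ((kleinDouble α).mulVec v) = 16384 * klein14 α v := by
  rw [klein14, kleinQuartic_kleinDouble_mulVec hα, kleinSextic_kleinDouble_mulVec hα, klein14]
  obtain ⟨p, q, hp, hq⟩ : ∃ p q, v 0 = p + q ∧ v 1 = p - q :=
    ⟨(v 0 + v 1) / 2, (v 0 - v 1) / 2, by ring, by ring⟩
  apply klein14Of_eq_of_quadratic (P := p ^ 2) (Q := q ^ 2) (Z := v 2 ^ 2) hα
  · simp only [kleinDouble_mulVec, sqEsymm₁, Matrix.cons_val, hp, hq]
    linear_combination (2 * v 2 ^ 2 + 4 * p ^ 2) * hα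
  · simp only [sqEsymm₁, hp, hq]; ring
  · simp only [kleinQuartic, sqEsymm₁, sqEsymm₂, hp, hq]; ring
  · simp only [kleinSextic, sqEsymm₁, sqEsymm₂, sqEsymm₃, hp, hq]; ring

omit [CharZero L] in
theorem klein_smul (c : L) (v : Fin 3 → L) :
    kleinQuartic α (c • v) = c ^ 4 * kleinQuartic α v ∧
      kleinSextic α (c • v) = c ^ 6 * kleinSextic α v ∧
      klein14 α (c • v) = c ^ 14 * klein14 α v := by
  simp only [klein14, klein14Of, kleinQuartic, kleinSextic, sqEsymm₁, sqEsymm₂, sqEsymm₃,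
    Pi.smul_apply, smul_eq_mul]
  exact ⟨by ring, by ring, by ring⟩

theorem half_kleinDouble_mem_kleinStabilizer (hα : α ^ 2 = α - 2) :
    (2⁻¹ : L) • kleinDouble α ∈ kleinStabilizer α := fun v => by
  obtain ⟨h4, h6, h14⟩ := klein_smul (α := α) 2⁻¹ ((kleinDouble α).mulVec v)
  rw [Matrix.smul_mulVec, h4, h6, h14, kleinQuartic_kleinDouble_mulVec hα,
    kleinSextic_kleinDouble_mulVec hα, klein14_kleinDouble_mulVec hα]
  exact ⟨by field_simp; norm_num, by field_simp; norm_num, by field_simp; norm_num⟩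

end Field

end KleinInvariants

section KleinDegree

open Polynomial

variable {K L : Type*} [Field K] [Field L] [Algebra K L]

theorem rank_le_six_mul_of_esymm_mem (F : IntermediateField K L) {x y z : L}
    (h₁ : x + y + z ∈ F) (h₂ : x * y + y * z + z * x ∈ F) (h₃ : x * y * z ∈ F) {n : ℕ}
    (hn : ∀ E : IntermediateField K L, F ≤ E → x ∈ E → y ∈ E → Module.rank E L ≤ n) :
    Module.rank F L ≤ (6 * n : ℕ) := by
  let p : F[X] := X ^ 3 - C ⟨_, h₁⟩ * X ^ 2 + C ⟨_, h₂⟩ * X - C ⟨_, h₃⟩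
  have hp : p.natDegree = 3 := by unfold p; compute_degree!
  rw [show 6 * n = p.natDegree * (2 * n) by rw [hp]; ring]
  refine rank_le_natDegree_mul F (ne_zero_of_natDegree_gt (n := 0) (by omega))
    (t := x) ?_ fun E hFE hx => ?_
  · simp only [p, map_sub, map_add, map_mul, map_pow, aeval_X, aeval_C,
      IntermediateField.algebraMap_apply]
    ring
  let q : E[X] := X ^ 2 + C ⟨x - (x + y + z), sub_mem hx (hFE h₁)⟩ * X +
    C ⟨x ^ 2 - (x + y + z) * x + (x * y + y * z + z * x),
      add_mem (sub_mem (pow_mem hx 2) (mul_mem (hFE h₁) hx)) (hFE h₂)⟩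
  have hq : q.natDegree = 2 := by unfold q; compute_degree!
  rw [← hq]
  refine rank_le_natDegree_mul E (ne_zero_of_natDegree_gt (n := 0) (by omega))
    (t := y) ?_ fun E' hEE' hy => hn E' (hFE.trans hEE') (hEE' hx) hy
  simp only [q, map_add, map_mul, map_pow, aeval_X, aeval_C,
    IntermediateField.algebraMap_apply]
  ring

variable [CharZero K] {α : K}

theorem rank_le_seven_mul_of_klein14Of_eq (F : IntermediateField K L) {u a b : L} (ha : a ∈ F)
    (hb : b ∈ F) (hu : klein14Of (algebraMap K L α) u a a = b) {n : ℕ}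
    (hn : ∀ E : IntermediateField K L, F ≤ E → u ∈ E → Module.rank E L ≤ n) :
    Module.rank F L ≤ (7 * n : ℕ) := by
  let p : F[X] := klein14Of (C (algebraMap K F α)) X (C ⟨a, ha⟩) (C ⟨a, ha⟩) - C ⟨b, hb⟩
  have hp : p.natDegree = 7 := by
    unfold p klein14Of
    compute_degree!
  rw [← hp]
  refine rank_le_natDegree_mul F (ne_zero_of_natDegree_gt (n := 0) (by omega)) (t := u) ?_ hn
  have hmap := map_klein14Of (aeval (R := F) u : F[X] →+* L) (C (algebraMap K F α)) X (C ⟨a, ha⟩)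
    (C ⟨a, ha⟩)
  simp only [RingHom.coe_coe, aeval_C, aeval_X, IntermediateField.algebraMap_apply] at hmap
  rw [map_sub, hmap, aeval_C, sub_eq_zero]
  exact hu

theorem sqEsymm_mem_of_klein_mem (F : IntermediateField K L) (hα : α ^ 2 = α - 2)
    {v : Fin 3 → L} {c : L}
    (h₁ : sqEsymm₁ v * c ∈ F) (h₄ : kleinQuartic (algebraMap K L α) v * c ^ 2 ∈ F)
    (h₆ : kleinSextic (algebraMap K L α) v * c ^ 3 ∈ F) :
    sqEsymm₂ v * c ^ 2 ∈ F ∧ sqEsymm₃ v * c ^ 3 ∈ F := by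
  have hk₂ : -2 - 3 * α ≠ 0 := fun h => by
    have : (28 : K) = 0 := by linear_combination (-5 + 3 * α) * h + 9 * hα
    norm_num at this
  have hk₃ : -14 - 35 * α ≠ 0 := fun h => by
    have : (3136 : K) = 0 := by linear_combination (-49 + 35 * α) * h + 1225 * hα
    norm_num at this
  have hdiv {k : K} (hk : k ≠ 0) {x : L} (hx : algebraMap K L k * x ∈ F) : x ∈ F := by
    have hk' := (map_ne_zero (algebraMap K L)).mpr hk
    rw [← mul_div_cancel_left₀ x hk']
    exact div_mem hx (F.algebraMap_mem k)
  have h₂ : sqEsymm₂ v * c ^ 2 ∈ F := hdiv hk₂ <| by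
    convert sub_mem h₄ (pow_mem h₁ 2) using 1
    simp only [kleinQuartic, map_sub, map_neg, map_mul, map_ofNat]
    ring
  refine ⟨h₂, hdiv hk₃ ?_⟩
  convert sub_mem (sub_mem h₆ (mul_mem (F.algebraMap_mem 2) (pow_mem h₁ 3)))
    (mul_mem (mul_mem (F.algebraMap_mem (-6 + 5 * α)) h₁) h₂) using 1
  simp only [kleinSextic, map_sub, map_add, map_neg, map_mul, map_ofNat]
  ring

/-- With `c = f₄ / f₆`, the invariants multiplied by powers of `c` have degree `0`. The tower from
`F` up adjoins `sqEsymm₁ v * c` (degree 7), `v 0 ^ 2 * c` (3), `v 1 ^ 2 * c` (2), `v 0 / v 2` (2)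
and `v 1 / v 2` (2). -/
theorem rank_le_168_mul_of_klein_mem (F : IntermediateField K L) (hα : α ^ 2 = α - 2)
    {v : Fin 3 → L} {c : L} (hc : c ≠ 0)
    (hc₄₆ : kleinQuartic (algebraMap K L α) v * c ^ 2 = kleinSextic (algebraMap K L α) v * c ^ 3)
    (h₄ : kleinQuartic (algebraMap K L α) v * c ^ 2 ∈ F)
    (h₁₄ : klein14 (algebraMap K L α) v * c ^ 7 ∈ F) {n : ℕ}
    (hn : ∀ E : IntermediateField K L, F ≤ E → v 0 / v 2 ∈ E → v 1 / v 2 ∈ E →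
      Module.rank E L ≤ n) : Module.rank F L ≤ (168 * n : ℕ) := by
  have hsq {E : IntermediateField K L} {k : Fin 3} (hk : v k ^ 2 * c ∈ E)
      (h2 : v 2 ^ 2 * c ∈ E) : (v k / v 2) ^ 2 ∈ E := by
    rw [div_pow, ← mul_div_mul_right _ _ hc]
    exact div_mem hk h2
  rw [show 168 * n = 7 * (6 * (2 * (2 * n))) by ring]
  refine rank_le_seven_mul_of_klein14Of_eq (α := α) F h₄ h₁₄ (u := sqEsymm₁ v * c) ?_
    fun E₁ hE₁ h₁ => ?_
  · nth_rw 2 [hc₄₆]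
    simp only [klein14, klein14Of]
    ring
  obtain ⟨h₂, h₃⟩ := sqEsymm_mem_of_klein_mem E₁ hα h₁ (hE₁ h₄) (hE₁ (hc₄₆ ▸ h₄))
  refine rank_le_six_mul_of_esymm_mem E₁ (x := v 0 ^ 2 * c) (y := v 1 ^ 2 * c)
    (z := v 2 ^ 2 * c) ?_ ?_ ?_ fun E₂ hE₂ hx hy => ?_
  · convert h₁ using 1; simp only [sqEsymm₁]; ring
  · convert h₂ using 1; simp only [sqEsymm₂]; ring
  · convert h₃ using 1; simp only [sqEsymm₃]; ring
  have hz : v 2 ^ 2 * c ∈ E₂ := by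
    convert sub_mem (sub_mem (hE₂ h₁) hx) hy using 1
    simp only [sqEsymm₁]
    ring
  refine rank_le_two_mul_of_sq_mem E₂ (hsq hx hz) fun E₃ hE₃ h0 => ?_
  refine rank_le_two_mul_of_sq_mem E₃ (hE₃ (hsq hy hz)) fun E₄ hE₄ h1 => ?_
  exact hn E₄ (hE₁.trans (hE₂.trans (hE₃.trans hE₄))) (hE₄ h0) h1

end KleinDegree

/-! ### Equivariant vectors of rational functions -/

section EquivariantVector

variable {Γ K L : Type*} [Group Γ] [Finite Γ] [Field K] [Field L] [Algebra K L]

theorem exists_equivariant_span (act : Γ →* (L ≃ₐ[K] L)) (F : IntermediateField K L)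
    (hF : ∀ g, ∀ x ∈ F, act g x ∈ F) (hfaithful : ∀ g, (∀ x ∈ F, act g x = x) → g = 1) {n : ℕ}
    (ρ : Γ →* Matrix (Fin n) (Fin n) K) (w : Fin n → L) (hw : ∀ g k, act g (w k) = w k) :
    ∃ v : Fin n → L, (∀ g, act g ∘ v = ((ρ g⁻¹).map (algebraMap K L)).mulVec v) ∧
      ∀ k, w k ∈ Submodule.span F (Set.range v) := by
  let A (g : Γ) : Matrix (Fin n) (Fin n) F := (ρ g).map (algebraMap K F)
  have hAA (g h : Γ) : A (g * h) = A g * A h := by simp only [A, map_mul, Matrix.map_mul]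
  have hA1 : A 1 = 1 := by simp [A]
  have hAfix (g h : Γ) : (A h).map (restrictAction act F hF g) = A h := by
    ext i j
    exact (act g).commutes _
  obtain ⟨E, hE, hAE⟩ := hilbert90_matrix _ (restrictAction_injective act F hF hfaithful) A hA1
    fun g h => by rw [hAfix, hAA]
  have hEmap (g : Γ) : E.map (restrictAction act F hF g) = A g⁻¹ * E := by
    conv_rhs => rw [← hAE g, ← mul_assoc, ← hAA, inv_mul_cancel, hA1, one_mul]
  let v : Fin n → L := (E.map (algebraMap F L)).mulVec w
  refine ⟨v, fun g => ?_, fun k => ?_⟩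
  · calc act g ∘ v = ((E.map (restrictAction act F hF g)).map (algebraMap F L)).mulVec w := by
          ext i
          refine ((act g : L →+* L).map_mulVec _ _ i).trans ?_
          rw [show (act g : L →+* L) ∘ w = w from funext (hw g)]
          rfl
      _ = ((A g⁻¹).map (algebraMap F L)).mulVec v := by
          rw [hEmap, Matrix.map_mul, ← Matrix.mulVec_mulVec]
  · have hwv : w = (E⁻¹.map (algebraMap F L)).mulVec v := by
      rw [Matrix.mulVec_mulVec, ← Matrix.map_mul,
        Matrix.nonsing_inv_mul _ ((Matrix.isUnit_iff_isUnit_det _).mp hE)]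
      rw [Matrix.map_one _ (map_zero _) (map_one _), Matrix.one_mulVec]
    rw [hwv]
    change ∑ j, E⁻¹ k j • v j ∈ _
    exact sum_mem fun j _ => Submodule.smul_mem _ _ (Submodule.subset_span ⟨j, rfl⟩)

end EquivariantVector

section DiffRatioField

variable (K : Type) [Field K] (I : Type)

/-- The field generated by the ratios of differences of the variables, that is, by the functions
on the projectivization of `K^I` modulo constant vectors. -/
def diffRatioField : IntermediateField K (RFF K I) :=
  IntermediateField.adjoin K
    {t | ∃ i j k l, t = (Xvar K I i - Xvar K I j) / (Xvar K I k - Xvar K I l)}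

variable {K I}

theorem Xvar_sub_ne_zero {i j : I} (h : i ≠ j) : Xvar K I i - Xvar K I j ≠ 0 :=
  sub_ne_zero.mpr (Xvar_injective.ne h)

theorem Xvar_sub_div_mem_diffRatioField (i j k l : I) :
    (Xvar K I i - Xvar K I j) / (Xvar K I k - Xvar K I l) ∈ diffRatioField K I :=
  IntermediateField.subset_adjoin _ _ ⟨i, j, k, l, rfl⟩

theorem permHom_mem_diffRatioField (g : Equiv.Perm I) :
    ∀ x ∈ diffRatioField K I, permHom K I g x ∈ diffRatioField K I := by
  apply map_mem_of_mem_adjoin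
  rintro _ ⟨i, j, k, l, rfl⟩
  simp only [map_div₀, map_sub, permHom_Xvar]
  exact Xvar_sub_div_mem_diffRatioField _ _ _ _

theorem apply_eq_or_eq_of_permHom_diffRatio_eq {g : Equiv.Perm I}
    (hg : ∀ x ∈ diffRatioField K I, permHom K I g x = x) {i j l : I} (hij : i ≠ j) (hil : i ≠ l)
    (hjl : j ≠ l) : g i = i ∨ g i = j := by
  classical
  have h := hg _ (Xvar_sub_div_mem_diffRatioField i j i l)
  simp only [map_div₀, map_sub, permHom_Xvar] at h
  rw [div_eq_div_iff (Xvar_sub_ne_zero (g.injective.ne hil)) (Xvar_sub_ne_zero hil)] at h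
  simp only [Xvar, ← map_sub, ← map_mul] at h
  have h := congrArg (MvPolynomial.rename (Function.update id j i))
    (IsFractionRing.injective (MvPolynomial I K) (RFF K I) h)
  simp only [map_mul, map_sub, MvPolynomial.rename_X, Function.update_self,
    Function.update_of_ne hij, Function.update_of_ne hjl.symm, id, sub_self, zero_mul,
    mul_eq_zero, sub_eq_zero, (MvPolynomial.X_injective (R := K)).eq_iff, hil, or_false,
    Function.update_apply] at h
  have hne := g.injective.ne hij
  grind

theorem eq_one_of_permHom_diffRatioField_eq [Fintype I] (hI : 3 ≤ Fintype.card I)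
    {g : Equiv.Perm I} (hg : ∀ x ∈ diffRatioField K I, permHom K I g x = x) : g = 1 := by
  classical
  ext i
  obtain ⟨j, hj⟩ := Fintype.exists_ne_of_one_lt_card (by omega) i
  obtain ⟨l, hl, hlj⟩ : ∃ l, l ≠ i ∧ l ≠ j := by
    by_contra! h
    have : Finset.univ ⊆ {i, j} := fun l _ => by
      by_cases hl : l = i
      · simp [hl]
      · simp [h l hl]
    exact absurd (hI.trans (Finset.card_le_card this)) (not_le.mpr (Finset.card_le_two.trans_lt
      (by norm_num)))
  have h₁ := apply_eq_or_eq_of_permHom_diffRatio_eq hg hj.symm hl.symm hlj.symm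
  have h₂ := apply_eq_or_eq_of_permHom_diffRatio_eq hg hl.symm hj.symm hlj
  have : g i = i := by grind
  simpa using this

variable (K) in
/-- The difference of the variable with index `k + 1` and the variable with index `0`. -/
def varDiff {n : ℕ} (k : Fin n) : RFF K (Fin (n + 1)) := Xvar K _ k.succ - Xvar K _ 0

theorem varDiff_ne_zero {n : ℕ} (k : Fin n) : varDiff K k ≠ 0 :=
  Xvar_sub_ne_zero (Fin.succ_ne_zero k)

theorem Xvar_sub_mem_span_varDiff (F : Type*) [Ring F] {n : ℕ}
    [Module F (RFF K (Fin (n + 1)))] (i j : Fin (n + 1)) :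
    Xvar K _ i - Xvar K _ j ∈ Submodule.span F (Set.range (varDiff K (n := n))) := by
  have h (i : Fin (n + 1)) :
      Xvar K _ i - Xvar K _ 0 ∈ Submodule.span F (Set.range (varDiff K (n := n))) := by
    induction i using Fin.cases with
    | zero => simp
    | succ k => exact Submodule.subset_span ⟨k, rfl⟩
  simpa using Submodule.sub_mem _ (h i) (h j)

theorem permHom_varDiff_mem_span (F : Type*) [Ring F] {n : ℕ} [Module F (RFF K (Fin (n + 1)))]
    (g : Equiv.Perm (Fin (n + 1))) (k : Fin n) :
    permHom K _ g (varDiff K k) ∈ Submodule.span F (Set.range (varDiff K (n := n))) := by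
  rw [varDiff, map_sub, permHom_Xvar, permHom_Xvar]
  exact Xvar_sub_mem_span_varDiff F _ _

theorem diffRatioField_le {n : ℕ} {B : IntermediateField K (RFF K (Fin (n + 1)))}
    {c : RFF K (Fin (n + 1))} (hc : c ≠ 0) (h : ∀ k, varDiff K k / c ∈ B) :
    diffRatioField K (Fin (n + 1)) ≤ B := by
  refine IntermediateField.adjoin_le_iff.mpr ?_
  rintro _ ⟨i, j, k, l, rfl⟩
  have hmem (i j) := div_mem_of_mem_span le_rfl h (Xvar_sub_mem_span_varDiff B i j)
  rw [← div_div_div_cancel_right₀ hc]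
  exact div_mem (hmem i j) (hmem k l)

theorem eq_top_of_sum_Xvar_mem [CharZero K] {n : ℕ}
    {B : IntermediateField K (RFF K (Fin (n + 1)))} (hsum : ∑ i, Xvar K _ i ∈ B)
    (hdiff : ∀ k, varDiff K k ∈ B) : B = ⊤ := by
  have h0 : Xvar K (Fin (n + 1)) 0 ∈ B := by
    have heq : Xvar K (Fin (n + 1)) 0 =
        (∑ i, Xvar K _ i - ∑ k, varDiff K k) / ((n + 1 : ℕ) : RFF K (Fin (n + 1))) := by
      rw [eq_div_iff (Nat.cast_ne_zero.mpr n.succ_ne_zero), Fin.sum_univ_succ]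
      simp only [varDiff, Finset.sum_sub_distrib]
      simp
      ring
    rw [heq]
    exact div_mem (sub_mem hsum (sum_mem fun k _ => hdiff k)) (natCast_mem B _)
  rw [eq_top_iff, ← adjoin_range_Xvar, IntermediateField.adjoin_le_iff]
  rintro _ ⟨i, rfl⟩
  induction i using Fin.cases with
  | zero => exact h0
  | succ k => simpa [varDiff] using add_mem (hdiff k) h0

theorem exists_fixed_mem_span_varDiff {n : ℕ} (hn : 2 ≤ n)
    (G : Subgroup (Equiv.Perm (Fin (n + 1)))) :
    ∃ w : RFF K (Fin (n + 1)), w ≠ 0 ∧ (∀ g : G, permHom K _ g w = w) ∧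
      w ∈ Submodule.span (diffRatioField K (Fin (n + 1))) (Set.range (varDiff K)) := by
  obtain ⟨w, hw, hspan⟩ := exists_fixed_span_eq ((permHom K _).comp G.subtype)
    (diffRatioField K _) (fun g => permHom_mem_diffRatioField _)
    (fun g hg => Subtype.ext (eq_one_of_permHom_diffRatioField_eq (by simpa using hn) hg))
    (varDiff K) fun g k => permHom_varDiff_mem_span _ _ k
  obtain ⟨i, hi⟩ : ∃ i, w i ≠ 0 := by
    by_contra! h
    have hmem : varDiff K ⟨0, by omega⟩ ∈ Submodule.span (diffRatioField K _) (Set.range w) :=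
      hspan.symm ▸ Submodule.subset_span (Set.mem_range_self _)
    rw [Submodule.span_eq_bot.mpr (by simpa using h)] at hmem
    exact varDiff_ne_zero _ ((Submodule.mem_bot _).mp hmem)
  exact ⟨w i, hi, fun g => hw g i, hspan ▸ Submodule.subset_span (Set.mem_range_self i)⟩

/-- The vector is built from the invariants `1`, the sum of the variables, and an invariant
combination of differences of variables; each of them is in turn a `diffRatioField`-linear
combination of the coordinates of the vector. -/
theorem exists_equivariant_generators [CharZero K] {n : ℕ} (hn : 2 ≤ n)
    (G : Subgroup (Equiv.Perm (Fin (n + 1)))) (ρ : G →* Matrix (Fin 3) (Fin 3) K) :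
    ∃ v : Fin 3 → RFF K (Fin (n + 1)),
      (∀ g : G, permHom K _ g ∘ v = ((ρ g⁻¹).map (algebraMap K _)).mulVec v) ∧ v ≠ 0 ∧
      ∀ B : IntermediateField K (RFF K (Fin (n + 1))), diffRatioField K _ ≤ B →
        ∀ j, v j ≠ 0 → (∀ k, v k / v j ∈ B) → B = ⊤ := by
  obtain ⟨w, hw0, hw, hspan⟩ := exists_fixed_mem_span_varDiff (K := K) hn G
  have hsum (g : G) : permHom K _ g (∑ i, Xvar K (Fin (n + 1)) i) = ∑ i, Xvar K _ i := by
    rw [map_sum]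
    exact Fintype.sum_equiv (g : Equiv.Perm (Fin (n + 1))) _ _ fun i => permHom_Xvar _ i
  obtain ⟨v, hv, hmem⟩ := exists_equivariant_span ((permHom K _).comp G.subtype)
    (diffRatioField K _) (fun g => permHom_mem_diffRatioField _)
    (fun g hg => Subtype.ext (eq_one_of_permHom_diffRatioField_eq (by simpa using hn) hg)) ρ
    ![1, ∑ i, Xvar K _ i, w] fun g k => match k with
      | 0 => map_one _
      | 1 => hsum g
      | 2 => hw g
  refine ⟨v, hv, ?_, fun B hB j hj hjB => ?_⟩
  · rintro rfl
    have := hmem 0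
    rw [Submodule.span_eq_bot.mpr (by rintro _ ⟨k, rfl⟩; rfl)] at this
    exact one_ne_zero ((Submodule.mem_bot _).mp this)
  · have hdiv (k) := div_mem_of_mem_span hB hjB (hmem k)
    have hvj : v j ∈ B := by
      have := inv_mem (hdiv 0)
      rwa [Matrix.cons_val_zero, one_div, inv_inv] at this
    have hsumB : ∑ i, Xvar K _ i ∈ B := by
      rw [← div_mul_cancel₀ (∑ i, Xvar K _ i) hj]
      exact mul_mem (hdiv 1) hvj
    have hwB : w ∈ B := by
      rw [← div_mul_cancel₀ w hj]
      exact mul_mem (hdiv 2) hvj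
    refine eq_top_of_sum_Xvar_mem hsumB fun k => ?_
    have hwk : w / varDiff K k ∈ B := hB <| div_mem_of_mem_span le_rfl
      (fun l => Xvar_sub_div_mem_diffRatioField _ _ _ _) hspan
    rw [← div_div_cancel₀ (b := varDiff K k) hw0]
    exact div_mem hwB hwk

end DiffRatioField

section Generic

open MvPolynomial

variable {K L : Type*} [Field K] [Field L] [Algebra K L] {s t : L}

variable (K) in
/-- The generic point of the affine chart `v 2 = 1`; algebraic identities at a point `![s, t, 1]`
with `s` and `t` algebraically independent lift to it and specialize to every `![a, b, 1]`. -/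
def affinePoint : Fin 3 → MvPolynomial (Fin 2) K := ![X 0, X 1, 1]

section aeval

variable {R : Type*} [CommRing R] [Algebra K R] (f : Fin 2 → R)

theorem aeval_comp_affinePoint : aeval f ∘ affinePoint K = ![f 0, f 1, 1] := by
  ext i
  fin_cases i <;> simp [affinePoint]

theorem aeval_kleinQuartic_affinePoint (α : K) :
    aeval f (kleinQuartic (C α) (affinePoint K)) =
      kleinQuartic (algebraMap K R α) ![f 0, f 1, 1] := by
  rw [← aeval_comp_affinePoint (K := K) f, ← aeval_C f]
  exact map_kleinQuartic (aeval (R := K) f).toRingHom _ _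

theorem aeval_kleinSextic_affinePoint (α : K) :
    aeval f (kleinSextic (C α) (affinePoint K)) =
      kleinSextic (algebraMap K R α) ![f 0, f 1, 1] := by
  rw [← aeval_comp_affinePoint (K := K) f, ← aeval_C f]
  exact map_kleinSextic (aeval (R := K) f).toRingHom _ _

theorem aeval_mulVec_affinePoint (M : Matrix (Fin 3) (Fin 3) K) (i : Fin 3) :
    aeval f ((M.map C).mulVec (affinePoint K) i) =
      (M.map (algebraMap K R)).mulVec ![f 0, f 1, 1] i := by
  refine ((aeval (R := K) f).toRingHom.map_mulVec _ _ i).trans ?_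
  rw [← aeval_comp_affinePoint (K := K) f, Matrix.map_map]
  congr 2
  ext i
  exact aeval_C f _

end aeval

theorem kleinQuartic_ne_zero_of_algebraicIndependent (hind : AlgebraicIndependent K ![s, t])
    (α : K) : kleinQuartic (algebraMap K L α) ![s, t, 1] ≠ 0 := fun h => by
  have hzero : kleinQuartic (C α) (affinePoint K) = 0 :=
    hind (by rw [aeval_kleinQuartic_affinePoint, map_zero]; exact h)
  have := aeval_kleinQuartic_affinePoint (0 : Fin 2 → K) α
  rw [hzero, map_zero] at this
  simp [kleinQuartic, sqEsymm₁, sqEsymm₂] at this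

variable [CharZero K]

theorem kleinSextic_ne_zero_of_algebraicIndependent (hind : AlgebraicIndependent K ![s, t])
    (α : K) : kleinSextic (algebraMap K L α) ![s, t, 1] ≠ 0 := fun h => by
  have hzero : kleinSextic (C α) (affinePoint K) = 0 :=
    hind (by rw [aeval_kleinSextic_affinePoint, map_zero]; exact h)
  have := aeval_kleinSextic_affinePoint (0 : Fin 2 → K) α
  rw [hzero, map_zero] at this
  simp [kleinSextic, sqEsymm₁, sqEsymm₂, sqEsymm₃] at this

theorem exists_eq_smul_one_of_mulVec_generic (hind : AlgebraicIndependent K ![s, t])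
    {M : Matrix (Fin 3) (Fin 3) K} {c : L}
    (h : (M.map (algebraMap K L)).mulVec ![s, t, 1] = c • ![s, t, 1]) :
    ∃ c : K, M = c • (1 : Matrix (Fin 3) (Fin 3) K) := by
  have hspec (a b : K) (i : Fin 3) : M.mulVec ![a, b, 1] i = ![a, b, 1] i *
      M.mulVec ![a, b, 1] 2 := by
    have hgen : (M.map C).mulVec (affinePoint K) i = affinePoint K i *
        (M.map C).mulVec (affinePoint K) 2 := hind <| by
      rw [map_mul, aeval_mulVec_affinePoint, aeval_mulVec_affinePoint, ← Function.comp_apply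
        (f := aeval ![s, t]), aeval_comp_affinePoint]
      change (M.map (algebraMap K L)).mulVec ![s, t, 1] i = ![s, t, 1] i *
        (M.map (algebraMap K L)).mulVec ![s, t, 1] 2
      simp [h, mul_comm c]
    have := congrArg (aeval ![a, b]) hgen
    rw [map_mul, aeval_mulVec_affinePoint, aeval_mulVec_affinePoint, ← Function.comp_apply
      (f := aeval ![a, b]), aeval_comp_affinePoint] at this
    exact this
  have hspec (a b : K) : a * M 0 0 + b * M 0 1 + M 0 2 = a * (a * M 2 0 + b * M 2 1 + M 2 2) ∧
      a * M 1 0 + b * M 1 1 + M 1 2 = b * (a * M 2 0 + b * M 2 1 + M 2 2) := by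
    have h0 := hspec a b 0
    have h1 := hspec a b 1
    simp only [Matrix.mulVec_eq_sum, Fin.sum_univ_three] at h0 h1
    simpa using And.intro h0 h1
  refine ⟨M 2 2, ?_⟩
  have h00 := hspec 0 0
  have h10 := hspec 1 0
  have h01 := hspec 0 1
  have hn0 := hspec (-1) 0
  have h0n := hspec 0 (-1)
  ext i j
  fin_cases i <;> fin_cases j <;> simp <;> grind

end Generic

section RatioField

variable (K : Type*) {L : Type*} [Field K] [Field L] [Algebra K L]

/-- The field generated over `K` by the affine coordinates of the point `[v 0 : v 1 : v 2]` of the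
projective plane. -/
def ratioField (v : Fin 3 → L) : IntermediateField K L :=
  IntermediateField.adjoin K (Set.range fun i => v i / v 2)

variable {K} {v : Fin 3 → L} {σ : L ≃ₐ[K] L} {M : Matrix (Fin 3) (Fin 3) K}

theorem div_mem_ratioField (i : Fin 3) : v i / v 2 ∈ ratioField K v :=
  IntermediateField.subset_adjoin _ _ ⟨i, rfl⟩

theorem map_div_eq_of_comp_eq_mulVec (hσ : σ ∘ v = (M.map (algebraMap K L)).mulVec v)
    (i : Fin 3) : σ (v i / v 2) =
      (M.map (algebraMap K L)).mulVec v i / (M.map (algebraMap K L)).mulVec v 2 := by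
  rw [map_div₀, ← hσ, Function.comp_apply, Function.comp_apply]

theorem map_mem_ratioField (h2 : v 2 ≠ 0) (hσ : σ ∘ v = (M.map (algebraMap K L)).mulVec v)
    {x : L} (hx : x ∈ ratioField K v) : σ x ∈ ratioField K v := by
  have hmem (i : Fin 3) : (M.map (algebraMap K L)).mulVec v i / v 2 ∈ ratioField K v := by
    simp only [Matrix.mulVec_eq_sum, Finset.sum_apply, Finset.sum_div, Pi.smul_apply,
      op_smul_eq_smul, smul_eq_mul, Matrix.transpose_apply, Matrix.map_apply]
    refine sum_mem fun j _ => ?_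
    rw [mul_comm, mul_div_assoc]
    exact mul_mem (algebraMap_mem _ _) (div_mem_ratioField j)
  refine map_mem_of_mem_adjoin σ ?_ x hx
  rintro _ ⟨i, rfl⟩
  have := div_mem (hmem i) (hmem 2)
  rwa [div_div_div_cancel_right₀ h2, ← map_div_eq_of_comp_eq_mulVec hσ] at this

theorem ratioField_le (h2 : v 2 ≠ 0) {E : IntermediateField K L} (h0 : v 0 / v 2 ∈ E)
    (h1 : v 1 / v 2 ∈ E) : ratioField K v ≤ E := by
  refine IntermediateField.adjoin_le_iff.mpr (Set.range_subset_iff.mpr fun k => ?_)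
  fin_cases k
  · exact h0
  · exact h1
  · exact (div_self h2).symm ▸ one_mem E

theorem map_eq_self_of_mem_span_ratioField {ι : Type*} {y : ι → L} (hv : σ ∘ v = v)
    (hy : ∀ i, σ (y i) = y i) {x : L} (hx : x ∈ Submodule.span (ratioField K v) (Set.range y)) :
    σ x = x := by
  have hfix : ∀ x ∈ ratioField K v, σ x = x := by
    refine map_eq_self_of_mem_adjoin _ ?_
    rintro _ ⟨i, rfl⟩
    rw [map_div₀]
    exact congrArg₂ _ (congrFun hv i) (congrFun hv 2)
  induction hx using Submodule.span_induction with
  | mem x hx => obtain ⟨i, rfl⟩ := hx; exact hy i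
  | zero => exact map_zero _
  | add x z _ _ hx hz => rw [map_add, hx, hz]
  | smul a x _ hx => rw [IntermediateField.smul_def, smul_eq_mul, map_mul, hfix _ a.2, hx]

variable {α : K}

theorem map_kleinQuartic_of_mem (hσ : σ ∘ v = (M.map (algebraMap K L)).mulVec v)
    (hM : M.map (algebraMap K L) ∈ kleinStabilizer (algebraMap K L α)) :
    σ (kleinQuartic (algebraMap K L α) v) = kleinQuartic (algebraMap K L α) v := by
  refine (map_kleinQuartic (σ : L →+* L) _ _).trans ?_
  rw [← (hM v).1, ← hσ]
  congr 1
  exact σ.commutes α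

theorem map_kleinSextic_of_mem (hσ : σ ∘ v = (M.map (algebraMap K L)).mulVec v)
    (hM : M.map (algebraMap K L) ∈ kleinStabilizer (algebraMap K L α)) :
    σ (kleinSextic (algebraMap K L α) v) = kleinSextic (algebraMap K L α) v := by
  refine (map_kleinSextic (σ : L →+* L) _ _).trans ?_
  rw [← (hM v).2.1, ← hσ]
  congr 1
  exact σ.commutes α

theorem map_klein14_of_mem (hσ : σ ∘ v = (M.map (algebraMap K L)).mulVec v)
    (hM : M.map (algebraMap K L) ∈ kleinStabilizer (algebraMap K L α)) :
    σ (klein14 (algebraMap K L α) v) = klein14 (algebraMap K L α) v := by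
  refine (map_klein14 (σ : L →+* L) _ _).trans ?_
  rw [← (hM v).2.2, ← hσ]
  congr 1
  exact σ.commutes α

theorem eq_smul_vec_div (h2 : v 2 ≠ 0) : v = v 2 • ![v 0 / v 2, v 1 / v 2, 1] := by
  ext i
  fin_cases i <;> simp [mul_div_cancel₀, h2]

theorem kleinQuartic_ne_zero (h2 : v 2 ≠ 0)
    (hind : AlgebraicIndependent K ![v 0 / v 2, v 1 / v 2]) (α : K) :
    kleinQuartic (algebraMap K L α) v ≠ 0 := by
  have := (klein_smul (α := algebraMap K L α) (v 2) ![v 0 / v 2, v 1 / v 2, 1]).1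
  rw [← eq_smul_vec_div h2] at this
  rw [this]
  exact mul_ne_zero (pow_ne_zero _ h2) (kleinQuartic_ne_zero_of_algebraicIndependent hind α)

variable [CharZero K]

theorem exists_eq_smul_one_of_fixes_ratioField (h2 : v 2 ≠ 0)
    (hind : AlgebraicIndependent K ![v 0 / v 2, v 1 / v 2])
    (hσ : σ ∘ v = (M.map (algebraMap K L)).mulVec v) (hfix : ∀ x ∈ ratioField K v, σ x = x) :
    ∃ c : K, M = c • (1 : Matrix (Fin 3) (Fin 3) K) := by
  have hM2 : (M.map (algebraMap K L)).mulVec v 2 ≠ 0 := by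
    rw [← hσ]
    exact (map_ne_zero σ).mpr h2
  have hMv : (M.map (algebraMap K L)).mulVec v =
      (M.map (algebraMap K L)).mulVec v 2 • ![v 0 / v 2, v 1 / v 2, 1] := by
    have h (i : Fin 3) : (M.map (algebraMap K L)).mulVec v i =
        (M.map (algebraMap K L)).mulVec v 2 * (v i / v 2) := by
      rw [← hfix _ (div_mem_ratioField i), map_div_eq_of_comp_eq_mulVec hσ, mul_div_cancel₀ _ hM2]
    ext i
    rw [h i]
    fin_cases i <;> simp [h2]
  refine exists_eq_smul_one_of_mulVec_generic hind
    (c := (M.map (algebraMap K L)).mulVec v 2 / v 2) ?_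
  refine smul_right_injective _ h2 ?_
  dsimp only
  rw [← Matrix.mulVec_smul, ← eq_smul_vec_div h2, smul_smul, mul_div_cancel₀ _ h2]
  exact hMv

theorem kleinSextic_ne_zero (h2 : v 2 ≠ 0)
    (hind : AlgebraicIndependent K ![v 0 / v 2, v 1 / v 2]) (α : K) :
    kleinSextic (algebraMap K L α) v ≠ 0 := by
  have := (klein_smul (α := algebraMap K L α) (v 2) ![v 0 / v 2, v 1 / v 2, 1]).2.1
  rw [← eq_smul_vec_div h2] at this
  rw [this]
  exact mul_ne_zero (pow_ne_zero _ h2) (kleinSextic_ne_zero_of_algebraicIndependent hind α)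

theorem exists_klein_invariants (hα : α ^ 2 = α - 2) (h2 : v 2 ≠ 0)
    (hind : AlgebraicIndependent K ![v 0 / v 2, v 1 / v 2]) :
    ∃ a b : L, (∀ (σ : L ≃ₐ[K] L) (M : Matrix (Fin 3) (Fin 3) K),
        M.map (algebraMap K L) ∈ kleinStabilizer (algebraMap K L α) →
        σ ∘ v = (M.map (algebraMap K L)).mulVec v → σ a = a ∧ σ b = b) ∧
      ∀ (F : IntermediateField K L) (n : ℕ), a ∈ F → b ∈ F →
        (∀ E : IntermediateField K L, F ≤ E → ratioField K v ≤ E → Module.rank E L ≤ n) →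
        Module.rank F L ≤ (168 * n : ℕ) := by
  have h₄ := kleinQuartic_ne_zero h2 hind α
  have h₆ := kleinSextic_ne_zero h2 hind α
  let c := kleinQuartic (algebraMap K L α) v / kleinSextic (algebraMap K L α) v
  refine ⟨kleinQuartic (algebraMap K L α) v * c ^ 2, klein14 (algebraMap K L α) v * c ^ 7,
    fun σ M hM hσ => ?_, fun F n ha hb hn => ?_⟩
  · have hc : σ c = c := by
      rw [map_div₀, map_kleinQuartic_of_mem hσ hM, map_kleinSextic_of_mem hσ hM]
    rw [map_mul, map_mul, map_pow, map_pow, hc, map_kleinQuartic_of_mem hσ hM,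
      map_klein14_of_mem hσ hM]
    exact ⟨rfl, rfl⟩
  · refine rank_le_168_mul_of_klein_mem F hα (div_ne_zero h₄ h₆) ?_ ha hb
      fun E hE h0 h1 => hn E hE (ratioField_le h2 h0 h1)
    rw [pow_succ _ 2, mul_comm _ (_ / _), ← mul_assoc, mul_div_cancel₀ _ h₆]

end RatioField

section KleinRationality

theorem ne_zero_of_span_range_eq {F V ι : Type*} [Ring F] [AddCommGroup V] [Module F V]
    {w y : ι → V} (h : Submodule.span F (Set.range w) = Submodule.span F (Set.range y))
    (hy : y ≠ 0) : w ≠ 0 := by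
  rintro rfl
  refine hy (funext fun i => ?_)
  have hle : Submodule.span F (Set.range y) ≤ ⊥ :=
    h ▸ Submodule.span_le.mpr (Set.range_subset_iff.mpr fun _ => rfl)
  exact hle (Submodule.subset_span ⟨i, rfl⟩)

variable {K : Type} [Field K] {m : ℕ}

theorem algebraicIndependent_ratio {v : Fin 3 → RFF K (Fin (m + 2))}
    (hv : ∀ B : IntermediateField K (RFF K (Fin (m + 2))), diffRatioField K _ ≤ B →
      (∀ k, v k / v 2 ∈ B) → B = ⊤) :
    AlgebraicIndependent K ![v 0 / v 2, v 1 / v 2] := by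
  let x : Fin (m + 2) → RFF K (Fin (m + 2)) := Fin.cons (v 0 / v 2) (Fin.cons (v 1 / v 2)
    fun k : Fin m => varDiff K k.castSucc / varDiff K (Fin.last m))
  have hx (i : Fin (m + 2)) : x i ∈ IntermediateField.adjoin K (Set.range x) :=
    IntermediateField.subset_adjoin _ _ ⟨i, rfl⟩
  have htop : IntermediateField.adjoin K (Set.range x) = ⊤ := by
    refine hv _ (diffRatioField_le (varDiff_ne_zero (Fin.last m)) fun k => ?_) fun k => ?_
    · cases k using Fin.lastCases with
      | last =>
        rw [div_self (varDiff_ne_zero _)]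
        exact one_mem _
      | cast k => exact hx k.succ.succ
    · fin_cases k
      · exact hx 0
      · exact hx 1
      · by_cases h : v 2 = 0 <;> simp [h]
  have hind : AlgebraicIndependent K x := by
    refine algebraicIndependent_of_isAlgebraic x ?_ (trdeg_RFF _).ge
    rw [htop]
    exact ⟨fun z => isAlgebraic_algebraMap (⟨z, trivial⟩ : (⊤ : IntermediateField K _))⟩
  convert hind.comp ![0, 1] (by simp [Function.Injective, Fin.forall_fin_two]) using 1
  ext i
  fin_cases i <;> rfl

theorem ne_zero_of_comp_eq_kleinCyclic_mulVec {L : Type*} [Field L] {σ : L ≃+* L} {v : Fin 3 → L}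
    (hv : v ≠ 0) (hσ : σ ∘ v = kleinCyclic.mulVec v) : v 2 ≠ 0 := fun h2 => hv <| by
  have hσ (i : Fin 3) : σ (v i) = kleinCyclic.mulVec v i := congrFun hσ i
  have h0 : v 0 = 0 := (map_eq_zero σ).mp <| by
    rw [hσ]; simp [kleinCyclic, Matrix.mulVec_eq_sum, Fin.sum_univ_three, h2]
  have h1 : v 1 = 0 := (map_eq_zero σ).mp <| by
    rw [hσ]; simp [kleinCyclic, Matrix.mulVec_eq_sum, Fin.sum_univ_three, h0]
  ext i
  fin_cases i <;> assumption

theorem exists_fixed_span_eq_ratioField [CharZero K] {n : ℕ} {G : Subgroup (Equiv.Perm (Fin n))}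
    {H N : Subgroup G} {ρ : G →* Matrix (Fin 3) (Fin 3) K}
    (hscalar : ∀ h ∈ H, ∀ c : K, ρ h = c • (1 : Matrix (Fin 3) (Fin 3) K) → h = 1)
    {v : Fin 3 → RFF K (Fin n)} (h2 : v 2 ≠ 0)
    (hind : AlgebraicIndependent K ![v 0 / v 2, v 1 / v 2])
    (hv : ∀ g : G, permHom K _ g ∘ v = ((ρ g⁻¹).map (algebraMap K _)).mulVec v) {k : ℕ}
    {y : Fin k → RFF K (Fin n)}
    (hy : ∀ (g : G) i, permHom K _ g (y i) ∈ Submodule.span K (Set.range y))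
    (hN : ∀ d ∈ N, ρ d = 1 ∧ ∀ i, permHom K _ d (y i) = y i) (hHN : H ⊔ N = ⊤) :
    ∃ w : Fin k → RFF K (Fin n), (∀ (g : G) i, permHom K _ g (w i) = w i) ∧
      Submodule.span (ratioField K v) (Set.range w) =
        Submodule.span (ratioField K v) (Set.range y) := by
  obtain ⟨w, hw, hspan⟩ := exists_fixed_span_eq ((permHom K _).comp (G.subtype.comp H.subtype))
    (ratioField K v) (fun g x hx => map_mem_ratioField h2 (hv g) hx)
    (fun g hg => by
      obtain ⟨c, hc⟩ := exists_eq_smul_one_of_fixes_ratioField h2 hind (hv g) hg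
      simpa using hscalar _ (inv_mem g.2) c hc) y
    (fun g i => Submodule.span_le_restrictScalars K _ _ (hy g i))
  have hwN (d : G) (hd : d ∈ N) (i : Fin k) : permHom K _ d (w i) = w i := by
    have hρd : ρ d⁻¹ = 1 := (hN _ (inv_mem hd)).1
    refine map_eq_self_of_mem_span_ratioField (y := y) ?_ (hN d hd).2
      (hspan ▸ Submodule.subset_span (Set.mem_range_self i))
    rw [hv, hρd]
    simp
  have hle : H ⊔ N ≤ (IntermediateField.fixingSubgroup
      (IntermediateField.adjoin K (Set.range w))).comap ((permHom K _).comp G.subtype) := by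
    refine sup_le (fun g hg => ?_) fun g hg => ?_ <;>
      refine (IntermediateField.mem_fixingSubgroup_iff _ _).mpr (map_eq_self_of_mem_adjoin _ ?_) <;>
      rintro _ ⟨i, rfl⟩
    · exact hw ⟨g, hg⟩ i
    · exact hwN g hg i
  refine ⟨w, fun g i => ?_, hspan⟩
  exact (IntermediateField.mem_fixingSubgroup_iff _ _).mp (hle (hHN ▸ Subgroup.mem_top g)) _
    (IntermediateField.subset_adjoin _ _ ⟨i, rfl⟩)

theorem exists_equivariant_plane [CharZero K] (hm : 1 ≤ m)
    {G : Subgroup (Equiv.Perm (Fin (m + 2)))} (ρ : G →* Matrix (Fin 3) (Fin 3) K)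
    (hcyc : ∃ g, ρ g = kleinCyclic) :
    ∃ v : Fin 3 → RFF K (Fin (m + 2)),
      (∀ g : G, permHom K _ g ∘ v = ((ρ g⁻¹).map (algebraMap K _)).mulVec v) ∧ v 2 ≠ 0 ∧
      AlgebraicIndependent K ![v 0 / v 2, v 1 / v 2] ∧
      ∀ B, diffRatioField K _ ≤ B → ratioField K v ≤ B → B = ⊤ := by
  obtain ⟨v, hv, hv0, hgen⟩ := exists_equivariant_generators (K := K) (Nat.succ_le_succ hm) G ρ
  have h2 : v 2 ≠ 0 := by
    obtain ⟨g, hg⟩ := hcyc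
    refine ne_zero_of_comp_eq_kleinCyclic_mulVec (σ := (permHom K _ (g⁻¹ : G)).toRingEquiv) hv0 ?_
    refine (hv g⁻¹).trans ?_
    rw [inv_inv, hg]
    congr 1
    ext i j
    fin_cases i <;> fin_cases j <;> simp [kleinCyclic]
  exact ⟨v, hv, h2, algebraicIndependent_ratio fun B hB => hgen B hB 2 h2,
    fun B hB hv => hgen B hB 2 h2 fun k => hv (div_mem_ratioField k)⟩

theorem isRatExt_fixedSub_of_klein [CharZero K] (hm : 1 ≤ m) {α : K} (hα : α ^ 2 = α - 2)
    {G : Subgroup (Equiv.Perm (Fin (m + 2)))} {H N : Subgroup G} (ρ : G →* Matrix (Fin 3) (Fin 3) K)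
    (hρ : ∀ g, (ρ g).map (algebraMap K (RFF K (Fin (m + 2)))) ∈ kleinStabilizer (algebraMap K _ α))
    (hcyc : ∃ g, ρ g = kleinCyclic)
    (hscalar : ∀ h ∈ H, ∀ c : K, ρ h = c • (1 : Matrix (Fin 3) (Fin 3) K) → h = 1)
    {y : Fin (m + 1) → RFF K (Fin (m + 2))} (hy0 : y ≠ 0)
    (hy : ∀ (g : G) i, permHom K _ g (y i) ∈ Submodule.span K (Set.range y))
    (hN : ∀ d ∈ N, ρ d = 1 ∧ ∀ i, permHom K _ d (y i) = y i) (hHN : H ⊔ N = ⊤) {n : ℕ}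
    (hdeg : ∀ E : IntermediateField K (RFF K (Fin (m + 2))), (∀ i j, y i / y j ∈ E) →
      (∀ B, E ≤ B → diffRatioField K _ ≤ B → B = ⊤) → Module.rank E (RFF K (Fin (m + 2))) ≤ n)
    (hcard : 168 * n ≤ Nat.card G) : IsRatExt K (fixedSub K _ G) := by
  obtain ⟨v, hv, h2, hind, hgen⟩ := exists_equivariant_plane hm ρ hcyc
  obtain ⟨w, hw, hspan⟩ := exists_fixed_span_eq_ratioField hscalar h2 hind hv hy hN hHN
  obtain ⟨j, hj⟩ := Function.ne_iff.mp (ne_zero_of_span_range_eq hspan hy0)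
  obtain ⟨a, b, hab, hrank⟩ := exists_klein_invariants hα h2 hind
  let t : Fin (m + 2) → RFF K (Fin (m + 2)) :=
    Fin.cons a (Fin.cons b fun k : Fin m => w (j.succAbove k) / w j)
  have ht (i : Fin (m + 2)) : t i ∈ IntermediateField.adjoin K (Set.range t) :=
    IntermediateField.subset_adjoin _ _ ⟨i, rfl⟩
  refine isRatExt_fixedSub_of_rank_le (t := t) (fun i => mem_fixedSub.mpr fun g hg => ?_) ?_
  · have hwg : ∀ i, permHom K _ g (w i) = w i := hw ⟨g, hg⟩
    refine Fin.cases ?_ (Fin.cases ?_ fun k => ?_) i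
    · exact (hab _ _ (hρ _) (hv ⟨g, hg⟩)).1
    · exact (hab _ _ (hρ _) (hv ⟨g, hg⟩)).2
    · exact (map_div₀ _ _ _).trans (by rw [hwg, hwg]; rfl)
  · refine (hrank _ n (ht 0) (ht 1) fun E hE hratio => ?_).trans (Nat.cast_le.mpr hcard)
    have hwE (k : Fin (m + 1)) : w k / w j ∈ E := by
      cases k using j.succAboveCases with
      | x => rw [div_self hj]; exact one_mem E
      | p k => exact hE (ht k.succ.succ)
    have hyE (i : Fin (m + 1)) : y i / w j ∈ E :=
      div_mem_of_mem_span hratio hwE (hspan ▸ Submodule.subset_span (Set.mem_range_self _))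
    refine hdeg E (fun i k => ?_) fun B hB hdiff => hgen B hdiff (hratio.trans hB)
    have := div_mem (hyE i) (hyE k)
    rwa [div_div_div_cancel_right₀ hj] at this

end KleinRationality

/-! ### The three-dimensional representation of `PSL(2,7)` -/

section SpanningRepresentation

variable {K Γ X ι : Type*} [Field K] [Group Γ] [MulAction Γ X] [Fintype ι]
  {u : X → ι → K}

theorem matrix_ext_of_mulVec_eq_on_span (hu : Submodule.span K (Set.range u) = ⊤)
    {M N : Matrix ι ι K} (h : ∀ x, M.mulVec (u x) = N.mulVec (u x)) : M = N := by
  classical exact Matrix.toLin'.injective (LinearMap.ext_on_range hu h)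

variable [DecidableEq ι]

theorem exists_mulVec_of_mem_closure [Finite Γ] {S : Set Γ} {P : Submonoid (Matrix ι ι K)}
    (hS : ∀ g ∈ S, ∃ M ∈ P, ∀ x, u (g • x) = M.mulVec (u x)) {g : Γ}
    (hg : g ∈ Subgroup.closure S) : ∃ M ∈ P, ∀ x, u (g • x) = M.mulVec (u x) := by
  rw [← Subgroup.mem_toSubmonoid, Subgroup.closure_toSubmonoid_of_finite] at hg
  induction hg using Submonoid.closure_induction with
  | mem g hg => exact hS g hg
  | one => exact ⟨1, P.one_mem, by simp⟩
  | mul g h _ _ ihg ihh =>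
    obtain ⟨⟨M, hM, hgM⟩, N, hN, hhN⟩ := And.intro ihg ihh
    exact ⟨M * N, P.mul_mem hM hN, fun x => by
      rw [mul_smul, hgM, hhN, Matrix.mulVec_mulVec]⟩

theorem exists_monoidHom_of_exists_mulVec (hu : Submodule.span K (Set.range u) = ⊤)
    {G : Subgroup Γ} {P : Submonoid (Matrix ι ι K)}
    (hG : ∀ g ∈ G, ∃ M ∈ P, ∀ x, u (g • x) = M.mulVec (u x)) :
    ∃ ρ : G →* Matrix ι ι K, ∀ g, ρ g ∈ P ∧ ∀ x, u (g.1 • x) = (ρ g).mulVec (u x) := by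
  choose ρ hρP hρ using fun g : G => hG g g.2
  refine ⟨⟨⟨ρ, ?_⟩, fun g h => ?_⟩, fun g => ⟨hρP g, hρ g⟩⟩
  · exact matrix_ext_of_mulVec_eq_on_span hu fun x => by
      rw [← hρ, OneMemClass.coe_one, one_smul, Matrix.one_mulVec]
  · exact matrix_ext_of_mulVec_eq_on_span hu fun x => by
      rw [← hρ, Subgroup.coe_mul, mul_smul, hρ, hρ, Matrix.mulVec_mulVec]

end SpanningRepresentation

section Klein

/-- The ring of integers `ℤ[ω]`, `ω² = ω - 2`, of `ℚ(√-7)`, where `ω = (1 + √-7) / 2`. -/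
abbrev Int7 : Type := QuadraticAlgebra ℤ (-2) 1

theorem Int7.norm_ne_zero {z : Int7} (hz : z ≠ 0) : z.norm ≠ 0 := by
  intro h
  have hsq : (2 * z.re + z.im) ^ 2 + 7 * z.im ^ 2 = 0 := by
    rw [QuadraticAlgebra.norm_def] at h
    linear_combination 4 * h
  have him : z.im = 0 := by nlinarith [sq_nonneg (2 * z.re + z.im), sq_nonneg z.im]
  have hre : z.re = 0 := by
    rw [him] at hsq
    nlinarith [sq_nonneg z.re]
  exact hz (QuadraticAlgebra.ext hre him)

theorem exists_int7_hom {K : Type*} [Field K] [CharZero K] {α : K} (hα : α ^ 2 = α - 2) :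
    ∃ φ : Int7 →+* K, Function.Injective φ ∧ φ QuadraticAlgebra.omega = α := by
  have hα' : α * α = (-2 : ℤ) • (1 : K) + (1 : ℤ) • α := by
    simp only [zsmul_eq_mul]
    push_cast
    linear_combination hα
  refine ⟨(QuadraticAlgebra.lift ⟨α, hα'⟩).toRingHom, ?_, by simp⟩
  refine (injective_iff_map_eq_zero _).2 fun z hz => by_contra fun hz0 => Int7.norm_ne_zero hz0 ?_
  have h := congrArg (QuadraticAlgebra.lift ⟨α, hα'⟩).toRingHom
    (QuadraticAlgebra.algebraMap_norm_eq_mul_star z)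
  rw [map_mul, hz, zero_mul] at h
  simpa using h

open QuadraticAlgebra in
/-- Coordinate vectors of the 28 bitangents of Klein's quartic, indexed by the pairs of points of
the projective line over `𝔽₇`; interchanging the two points changes the sign. Here the point `∞`
has number `0`, and the other points are numbered such that `z ↦ z + 1` is the cycle
`c[1, 2, 4, 3, 6, 7, 5]`. -/
def bitangent (i j : Fin 8) : Fin 3 → Int7 :=
  if i < j then upper i j else -upper j i
where
  /-- The vectors `bitangent i j` for `i < j`. -/
  upper : Fin 8 → Fin 8 → Fin 3 → Int7 :=
    ![![0, ![ω, ω, ω], ![-1, 2 - ω, 1], ![ω - 1, 0, -1 - ω], ![1, -1, 2 - ω], ![-1 - ω, ω - 1, 0],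
        ![2 - ω, 1, -1], ![0, -1 - ω, ω - 1]],
      ![0, 0, ![1 + ω, 0, 1 - ω], ![-1, ω - 2, 1], ![1 - ω, 1 + ω, 0], ![1, -1, ω - 2],
        ![0, 1 - ω, 1 + ω], ![ω - 2, 1, -1]],
      ![0, 0, 0, ![ω, -ω, ω], ![0, 1 - ω, -1 - ω], ![2 - ω, 1, 1], ![ω - 1, 1 + ω, 0],
        ![-1, -1, 2 - ω]],
      ![0, 0, 0, 0, ![ω - 2, 1, 1], ![0, -1 - ω, 1 - ω], ![-1, -1, ω - 2], ![1 + ω, ω - 1, 0]],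
      ![0, 0, 0, 0, 0, ![ω, ω, -ω], ![-1 - ω, 0, 1 - ω], ![1, 2 - ω, 1]],
      ![0, 0, 0, 0, 0, 0, ![1, ω - 2, 1], ![1 - ω, 0, -1 - ω]],
      ![0, 0, 0, 0, 0, 0, 0, ![-ω, ω, ω]],
      0]

/-- The permutation of the points of the projective line that acts on bitangents as
`kleinCyclic`. -/
def kleinCyclicPerm : Equiv.Perm (Fin 8) := c[2, 4, 6] * c[3, 5, 7]

/-- The permutation of the points of the projective line that acts on bitangents as
`kleinSigned`. -/
def kleinSignedPerm : Equiv.Perm (Fin 8) := c[0, 2, 7, 4] * c[1, 3, 6, 5]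

/-- The permutation of the points of the projective line that acts on bitangents as half of
`kleinDouble`. -/
def kleinDoublePerm : Equiv.Perm (Fin 8) := c[0, 7] * c[1, 2] * c[3, 4] * c[5, 6]

/-- The group `PSL(2,7)` acting on the projective line over `𝔽₇`, with the points numbered as in
`bitangent`. -/
def psl27 : Subgroup (Equiv.Perm (Fin 8)) :=
  Subgroup.closure {kleinCyclicPerm, kleinSignedPerm, kleinDoublePerm}

theorem bitangent_kleinCyclicPerm (i j : Fin 8) :
    bitangent (kleinCyclicPerm i) (kleinCyclicPerm j) = kleinCyclic.mulVec (bitangent i j) := by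
  decide +revert +kernel

theorem bitangent_kleinSignedPerm (i j : Fin 8) :
    bitangent (kleinSignedPerm i) (kleinSignedPerm j) = kleinSigned.mulVec (bitangent i j) := by
  decide +revert +kernel

theorem two_smul_bitangent_kleinDoublePerm (i j : Fin 8) :
    2 • bitangent (kleinDoublePerm i) (kleinDoublePerm j) =
      (kleinDouble QuadraticAlgebra.omega).mulVec (bitangent i j) := by
  decide +revert +kernel

theorem eq_or_eq_of_crossProduct_bitangent_eq_zero {i j k l : Fin 8} (hij : i ≠ j) (hkl : k ≠ l)
    (h : crossProduct (bitangent i j) (bitangent k l) = 0) : k = i ∨ k = j := by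
  decide +revert +kernel

theorem det_bitangent_ne_zero :
    (Matrix.of ![bitangent 0 1, bitangent 0 2, bitangent 0 3]).det ≠ 0 := by
  rw [Matrix.det_fin_three]
  decide +kernel

section MapMatrix

variable {R S : Type*} [CommRing R] [CommRing S] (f : R →+* S)

theorem map_kleinCyclic : kleinCyclic.map f = kleinCyclic := by
  ext i j; fin_cases i <;> fin_cases j <;> simp [kleinCyclic]

theorem map_kleinSigned : kleinSigned.map f = kleinSigned := by
  ext i j; fin_cases i <;> fin_cases j <;> simp [kleinSigned]

theorem map_kleinDouble (α : R) : (kleinDouble α).map f = kleinDouble (f α) := by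
  ext i j; fin_cases i <;> fin_cases j <;> simp [kleinDouble]

end MapMatrix

section Map

variable {K : Type*} [Field K] {φ : Int7 →+* K}

/-- The bitangent vectors over an extension of `ℤ[ω]`, indexed by ordered pairs. -/
def bitangentMap (φ : Int7 →+* K) (x : Fin 8 × Fin 8) : Fin 3 → K := φ ∘ bitangent x.1 x.2

theorem span_bitangentMap (hφ : Function.Injective φ) :
    Submodule.span K (Set.range (bitangentMap φ)) = ⊤ := by
  set M := φ.mapMatrix (Matrix.of ![bitangent 0 1, bitangent 0 2, bitangent 0 3])
  have hM : M.det ≠ 0 := by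
    rw [← RingHom.map_det]
    exact (map_ne_zero_iff φ hφ).2 det_bitangent_ne_zero
  have hli := Matrix.linearIndependent_rows_iff_isUnit.2
    ((Matrix.isUnit_iff_isUnit_det M).2 hM.isUnit)
  refine top_le_iff.1 ((hli.span_eq_top_of_card_eq_finrank (by simp)).ge.trans
    (Submodule.span_mono ?_))
  rintro _ ⟨i, rfl⟩
  fin_cases i
  exacts [⟨(0, 1), rfl⟩, ⟨(0, 2), rfl⟩, ⟨(0, 3), rfl⟩]

theorem eq_one_of_bitangentMap_eq_smul (hφ : Function.Injective φ) {h : Equiv.Perm (Fin 8)} {c : K}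
    (hc : ∀ x, bitangentMap φ (h • x) = c • bitangentMap φ x) : h = 1 := by
  have hcross (a b : Fin 3 → Int7) : crossProduct (φ ∘ a) (φ ∘ b) = φ ∘ crossProduct a b := by
    ext i; fin_cases i <;> simp [cross_apply]
  have hmem {i j : Fin 8} (hij : i ≠ j) : h i = i ∨ h i = j := by
    refine eq_or_eq_of_crossProduct_bitangent_eq_zero hij (h.injective.ne hij) (funext fun k => ?_)
    refine (map_eq_zero_iff φ hφ).1 ?_
    have h0 : crossProduct (bitangentMap φ (i, j)) (bitangentMap φ (h • (i, j))) = 0 := by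
      rw [hc, map_smul, cross_self, smul_zero]
    exact congrFun ((hcross _ _).symm.trans h0) k
  ext1 i
  by_contra hi
  have h8 : ∀ i : Fin 8, ∃ j k, i ≠ j ∧ i ≠ k ∧ j ≠ k := by decide
  obtain ⟨j, k, hij, hik, hjk⟩ := h8 i
  exact hjk (((hmem hij).resolve_left hi).symm.trans ((hmem hik).resolve_left hi))

theorem exists_mulVec_bitangentMap [CharZero K] {P : Submonoid (Matrix (Fin 3) (Fin 3) K)}
    (hcyc : kleinCyclic ∈ P) (hsgn : kleinSigned ∈ P)
    (hdbl : (2⁻¹ : K) • kleinDouble (φ QuadraticAlgebra.omega) ∈ P) {g : Equiv.Perm (Fin 8)}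
    (hg : g ∈ psl27) :
    ∃ M ∈ P, ∀ x, bitangentMap φ (g • x) = M.mulVec (bitangentMap φ x) := by
  have hmap (M : Matrix (Fin 3) (Fin 3) Int7) (v : Fin 3 → Int7) :
      φ ∘ M.mulVec v = (M.map φ).mulVec (φ ∘ v) := funext (φ.map_mulVec M v)
  refine exists_mulVec_of_mem_closure ?_ hg
  rintro _ (rfl | rfl | rfl)
  · refine ⟨_, hcyc, fun x => ?_⟩
    exact (congrArg (φ ∘ ·) (bitangent_kleinCyclicPerm x.1 x.2)).trans
      ((hmap _ _).trans (by rw [map_kleinCyclic]; rfl))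
  · refine ⟨_, hsgn, fun x => ?_⟩
    exact (congrArg (φ ∘ ·) (bitangent_kleinSignedPerm x.1 x.2)).trans
      ((hmap _ _).trans (by rw [map_kleinSigned]; rfl))
  · refine ⟨_, hdbl, fun x => ?_⟩
    have h := (congrArg (φ ∘ ·) (two_smul_bitangent_kleinDoublePerm x.1 x.2)).trans (hmap _ _)
    rw [map_kleinDouble] at h
    rw [Matrix.smul_mulVec, bitangentMap, bitangentMap, ← h, eq_inv_smul_iff₀ two_ne_zero]
    ext i
    simp [map_ofNat φ]

end Map

theorem exists_klein_representation {K : Type*} (L : Type*) [Field K] [CharZero K] [Field L]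
    [Algebra K L] {α : K} (hα : α ^ 2 = α - 2) :
    ∃ ρ : psl27 →* Matrix (Fin 3) (Fin 3) K,
      (∀ g, (ρ g).map (algebraMap K L) ∈ kleinStabilizer (algebraMap K L α)) ∧
      (∃ g, ρ g = kleinCyclic) ∧
      ∀ h (c : K), ρ h = c • (1 : Matrix (Fin 3) (Fin 3) K) → h = 1 := by
  obtain ⟨φ, hφ, hω⟩ := exists_int7_hom hα
  have hspan := span_bitangentMap hφ
  let P : Submonoid (Matrix (Fin 3) (Fin 3) K) :=
    (kleinStabilizer (algebraMap K L α)).comap (algebraMap K L).mapMatrix.toMonoidHom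
  have hα' : algebraMap K L α ^ 2 = algebraMap K L α - 2 := by
    rw [← map_pow, hα, map_sub, map_ofNat]
  have hP {M : Matrix (Fin 3) (Fin 3) K} {N : Matrix (Fin 3) (Fin 3) L}
      (hMN : M.map (algebraMap K L) = N) (hN : N ∈ kleinStabilizer (algebraMap K L α)) : M ∈ P := by
    rwa [← hMN] at hN
  have hcyc := hP (map_kleinCyclic _) (kleinCyclic_mem_kleinStabilizer _)
  have hsgn := hP (map_kleinSigned _) (kleinSigned_mem_kleinStabilizer _)
  have hdbl : (2⁻¹ : K) • kleinDouble (φ QuadraticAlgebra.omega) ∈ P := by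
    have := charZero_of_injective_algebraMap (algebraMap K L).injective
    refine hP ?_ (half_kleinDouble_mem_kleinStabilizer hα')
    rw [hω, ← map_kleinDouble]
    ext i j
    simp [map_ofNat (algebraMap K L)]
  obtain ⟨ρ, hρ⟩ := exists_monoidHom_of_exists_mulVec hspan
    fun _ => exists_mulVec_bitangentMap hcyc hsgn hdbl
  refine ⟨ρ, fun g => (hρ g).1, ⟨⟨kleinCyclicPerm, Subgroup.subset_closure (by simp)⟩, ?_⟩, ?_⟩
  · refine matrix_ext_of_mulVec_eq_on_span hspan fun x => ?_
    rw [← (hρ _).2, ← map_kleinCyclic φ]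
    exact (congrArg (φ ∘ ·) (bitangent_kleinCyclicPerm x.1 x.2)).trans
      (funext (φ.map_mulVec _ _))
  · intro h c hc
    refine Subtype.ext (eq_one_of_bitangentMap_eq_smul hφ (c := c) fun x => ?_)
    rw [(hρ h).2, hc, Matrix.smul_mulVec, Matrix.one_mulVec]

end Klein

/-! ### Groups containing a 7-cycle -/

section CardPretransitive

theorem card_eq_card_mul_card_smul_eq {Γ X : Type*} [Group Γ] [Finite Γ] [MulAction Γ X] [Finite X]
    [MulAction.IsPretransitive Γ X] (x y : X) :
    Nat.card Γ = Nat.card X * Nat.card {g : Γ // g • x = y} := by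
  classical
  have := Fintype.ofFinite X
  have hfib (z : X) : Nat.card {g : Γ // g • x = z} = Nat.card {g : Γ // g • x = y} := by
    obtain ⟨h, rfl⟩ := MulAction.exists_smul_eq Γ z y
    exact Nat.card_congr ((Equiv.mulLeft h).subtypeEquiv fun g => by simp [mul_smul])
  rw [← Nat.card_congr (Equiv.sigmaFiberEquiv fun g : Γ => g • x), Nat.card_sigma]
  simp [hfib]

end CardPretransitive

section Shift

/-- The translation `z ↦ z + 1` of the projective line over `𝔽₇`, with the points numbered as in
`bitangent`. -/
def shiftPerm : Equiv.Perm (Fin 8) := c[1, 2, 4, 3, 6, 7, 5]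

theorem exists_shiftPerm_pow_apply_eq {a b : Fin 8} (ha : a ≠ 0) (hb : b ≠ 0) :
    ∃ n : Fin 7, (shiftPerm ^ (n : ℕ)) a = b := by
  decide +revert +kernel

theorem shiftPerm_pow_apply_zero (n : ℕ) : (shiftPerm ^ n) 0 = 0 :=
  Equiv.Perm.pow_apply_eq_self_of_apply_eq_self (by decide) n

variable {G : Subgroup (Equiv.Perm (Fin 8))}

theorem isPretransitive_of_shiftPerm_mem (hc : shiftPerm ∈ G) (hG : ∃ g ∈ G, g 0 ≠ 0) :
    MulAction.IsPretransitive G (Fin 8) := by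
  obtain ⟨g, hg, hg0⟩ := hG
  refine (MulAction.isPretransitive_iff_base (0 : Fin 8)).2 fun a => ?_
  by_cases ha : a = 0
  · exact ⟨1, by rw [one_smul, ha]⟩
  · obtain ⟨n, hn⟩ := exists_shiftPerm_pow_apply_eq hg0 ha
    exact ⟨⟨shiftPerm ^ (n : ℕ) * g, G.mul_mem (G.pow_mem hc _) hg⟩, hn⟩

theorem isTwoPretransitive_of_shiftPerm_mem [MulAction.IsPretransitive G (Fin 8)]
    (hc : shiftPerm ∈ G) : MulAction.IsMultiplyPretransitive G (Fin 8) 2 := by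
  have key {a b : Fin 8} (hab : a ≠ b) : ∃ g : G, g • a = 0 ∧ g • b = 1 := by
    obtain ⟨g, hg⟩ := MulAction.exists_smul_eq G a 0
    have hgb : g • b ≠ 0 := fun h => hab (MulAction.injective g (hg.trans h.symm))
    obtain ⟨n, hn⟩ := exists_shiftPerm_pow_apply_eq hgb one_ne_zero
    refine ⟨⟨shiftPerm, hc⟩ ^ (n : ℕ) * g, ?_, ?_⟩
    · rw [mul_smul, hg]
      exact shiftPerm_pow_apply_zero n
    · rw [mul_smul]
      exact hn
  rw [MulAction.is_two_pretransitive_iff]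
  intro a b a' b' hab hab'
  obtain ⟨⟨g, hga, hgb⟩, h, hha, hhb⟩ := And.intro (key hab) (key hab')
  exact ⟨h⁻¹ * g, by rw [mul_smul, inv_smul_eq_iff, hga, hha],
    by rw [mul_smul, inv_smul_eq_iff, hgb, hhb]⟩

/-- The elements of `G` that interchange the points `0` and `1`. If `G` is transitive and contains
`shiftPerm`, then it is `2`-transitive, and generated by its exchanges together with `shiftPerm`. -/
def exchanges (G : Subgroup (Equiv.Perm (Fin 8))) : Set (Equiv.Perm (Fin 8)) :=
  {g | g ∈ G ∧ g 0 = 1 ∧ g 1 = 0}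

theorem exchanges_mono {H : Subgroup (Equiv.Perm (Fin 8))} (h : G ≤ H) :
    exchanges G ⊆ exchanges H :=
  fun _ hg => ⟨h hg.1, hg.2⟩

section Pretransitive

variable [MulAction.IsPretransitive G (Fin 8)] (hc : shiftPerm ∈ G)

include hc

theorem exists_mem_apply_eq_one_apply_eq_zero {a b : Fin 8} (hab : a ≠ b) :
    ∃ g ∈ G, g a = 1 ∧ g b = 0 := by
  obtain ⟨g, hg⟩ := (MulAction.is_two_pretransitive_iff (G := G) (α := Fin 8)).1
    (isTwoPretransitive_of_shiftPerm_mem hc) hab (one_ne_zero (α := Fin 8))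
  exact ⟨g, g.2, hg⟩

theorem exchanges_nonempty : (exchanges G).Nonempty :=
  exists_mem_apply_eq_one_apply_eq_zero hc zero_ne_one

theorem le_of_exchanges_subset {H : Subgroup (Equiv.Perm (Fin 8))} (hcH : shiftPerm ∈ H)
    (h : exchanges G ⊆ H) : G ≤ H := by
  obtain ⟨x, hx⟩ := exchanges_nonempty hc
  have : MulAction.IsPretransitive (G ⊓ H : Subgroup _) (Fin 8) :=
    isPretransitive_of_shiftPerm_mem ⟨hc, hcH⟩
      ⟨x, ⟨hx.1, h hx⟩, by rw [hx.2.1]; exact one_ne_zero⟩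
  intro g hg
  obtain ⟨k, ⟨hkG, hkH⟩, hk0, hk1⟩ := exists_mem_apply_eq_one_apply_eq_zero (G := G ⊓ H)
    ⟨hc, hcH⟩ (g.injective.ne (zero_ne_one (α := Fin 8)))
  exact (H.mul_mem_cancel_left hkH).1 (h ⟨G.mul_mem hkG hg, hk0, hk1⟩)

theorem card_eq_mul_ncard_exchanges : Nat.card G = 56 * (exchanges G).ncard := by
  have : MulAction.IsPretransitive G (Fin 2 ↪ Fin 8) := isTwoPretransitive_of_shiftPerm_mem hc
  let x : Fin 2 ↪ Fin 8 := ⟨![0, 1], by decide⟩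
  let y : Fin 2 ↪ Fin 8 := ⟨![1, 0], by decide⟩
  have hxy (g : G) : g • x = y ↔ g.1 0 = 1 ∧ g.1 1 = 0 := by
    rw [DFunLike.ext_iff, Fin.forall_fin_two]
    rfl
  calc Nat.card G
    _ = Nat.card (Fin 2 ↪ Fin 8) * Nat.card {g : G // g.1 0 = 1 ∧ g.1 1 = 0} :=
      (@card_eq_card_mul_card_smul_eq G _ _ _ _ _ this x y).trans
        (congrArg _ (Nat.card_congr (Equiv.subtypeEquivRight hxy)))
    _ = Nat.card (Fin 2 ↪ Fin 8) * (exchanges G).ncard :=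
      congrArg _ (Nat.card_congr (Equiv.subtypeSubtypeEquivSubtypeInter (· ∈ G)
        fun g : Equiv.Perm (Fin 8) => g 0 = 1 ∧ g 1 = 0))
    _ = 56 * (exchanges G).ncard := by
      rw [Nat.card_eq_fintype_card, Fintype.card_embedding_eq]
      rfl

end Pretransitive

end Shift

section PermCode

/-- The number with decimal digits `f 0, …, f 7`. -/
def ofDigits8 (f : ℕ → ℕ) : ℕ :=
  10 * (10 * (10 * (10 * (10 * (10 * (10 * f 0 + f 1) + f 2) + f 3) + f 4) + f 5) + f 6) + f 7

/-- The digit in position `i`, counted from the left, of an eight-digit decimal number. -/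
def digit8 (p i : ℕ) : ℕ := p / 10 ^ (7 - i) % 10

/-- The one-line notation of a permutation of `Fin 8` read as a decimal number: finite searches
among permutations are carried out on these codes, on which the kernel can compute quickly. -/
def permCode (σ : Equiv.Perm (Fin 8)) : ℕ := ofDigits8 fun i => σ (Fin.ofNat 8 i)

/-- The code of a product of permutations in terms of the codes of the factors. -/
def mulCode (p q : ℕ) : ℕ := ofDigits8 fun i => digit8 p (digit8 q i)

/-- The code of the `20`th power of a permutation. -/
def pow20Code (p : ℕ) : ℕ :=
  (fun q => mulCode q (mulCode (mulCode q q) (mulCode q q))) (mulCode (mulCode p p) (mulCode p p))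

/-- The number of points moved by a permutation, in terms of its code. -/
def movedCount (p : ℕ) : ℕ := (List.range 8).countP fun i => digit8 p i ≠ i

theorem ofDigits8_congr {f g : ℕ → ℕ} (h : ∀ i : Fin 8, f i = g i) :
    ofDigits8 f = ofDigits8 g := by
  have h (i : ℕ) (hi : i < 8) : f i = g i := h ⟨i, hi⟩
  simp [ofDigits8, h]

theorem digit8_ofDigits8 {f : ℕ → ℕ} (hf : ∀ i, f i < 8) {i : ℕ} (hi : i < 8) :
    digit8 (ofDigits8 f) i = f i := by
  have := And.intro (hf 0) <| And.intro (hf 1) <| And.intro (hf 2) <| And.intro (hf 3) <|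
    And.intro (hf 4) <| And.intro (hf 5) <| And.intro (hf 6) (hf 7)
  interval_cases i <;> norm_num [digit8, ofDigits8] <;> omega

theorem digit8_permCode (σ : Equiv.Perm (Fin 8)) (i : Fin 8) : digit8 (permCode σ) i = σ i := by
  rw [permCode, digit8_ofDigits8 (fun _ => Fin.is_lt _) i.is_lt, Fin.ofNat_val_eq_self]

theorem permCode_injective : Function.Injective permCode := fun σ τ h => by
  ext i
  rw [← digit8_permCode, h, digit8_permCode]

theorem permCode_mul (σ τ : Equiv.Perm (Fin 8)) :
    permCode (σ * τ) = mulCode (permCode σ) (permCode τ) := by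
  refine ofDigits8_congr fun i => ?_
  rw [digit8_permCode, digit8_permCode, Fin.ofNat_val_eq_self, Equiv.Perm.mul_apply]

theorem permCode_pow_twenty (σ : Equiv.Perm (Fin 8)) :
    permCode (σ ^ 20) = pow20Code (permCode σ) := by
  simp only [pow20Code, ← permCode_mul]
  simp [pow_succ, mul_assoc]

theorem movedCount_permCode (σ : Equiv.Perm (Fin 8)) :
    movedCount (permCode σ) = σ.support.card := by
  have hsupp : σ.support = ({i | digit8 (permCode σ) i ≠ i} : Finset (Fin 8)) := by
    ext i
    simp [digit8_permCode, Fin.ext_iff]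
  rw [hsupp, Finset.card_filter, Fin.sum_univ_eight]
  simp [movedCount, List.range_succ, List.countP_cons, add_assoc, add_comm]

end PermCode

section Affine

theorem fin8_xor_comm (x y : Fin 8) : x ^^^ y = y ^^^ x := by decide +revert

theorem fin8_xor_assoc (x y z : Fin 8) : x ^^^ y ^^^ z = x ^^^ (y ^^^ z) := by decide +revert

theorem fin8_xor_left_comm (x y z : Fin 8) : x ^^^ (y ^^^ z) = y ^^^ (x ^^^ z) := by
  decide +revert

theorem fin8_xor_self (x : Fin 8) : x ^^^ x = 0 := by decide +revert

theorem fin8_xor_zero (x : Fin 8) : x ^^^ 0 = x := by decide +revert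

theorem fin8_zero_xor (x : Fin 8) : 0 ^^^ x = x := by decide +revert

theorem fin8_xor_cancel (x y : Fin 8) : x ^^^ (x ^^^ y) = y := by decide +revert

/-- The affine group `AGL(3,2)` of `𝔽₂³`, a number `< 8` standing for the vector of its binary
digits. -/
def agl32 : Subgroup (Equiv.Perm (Fin 8)) where
  carrier := {σ | ∀ a b c, σ (a ^^^ b ^^^ c) = σ a ^^^ σ b ^^^ σ c}
  one_mem' _ _ _ := rfl
  mul_mem' hσ hτ a b c := by simp only [Equiv.Perm.mul_apply, hτ a b c, hσ _ _ _]
  inv_mem' {σ} hσ a b c := by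
    rw [Equiv.Perm.inv_eq_iff_eq, hσ]
    simp

theorem mem_agl32_iff {σ : Equiv.Perm (Fin 8)} :
    σ ∈ agl32 ↔ σ 3 = σ 0 ^^^ σ 1 ^^^ σ 2 ∧ σ 5 = σ 0 ^^^ σ 1 ^^^ σ 4 ∧
      σ 6 = σ 0 ^^^ σ 2 ^^^ σ 4 ∧ σ 7 = σ 1 ^^^ σ 2 ^^^ σ 4 := by
  refine ⟨fun h => ⟨h 0 1 2, h 0 1 4, h 0 2 4, h 1 2 4⟩, fun ⟨h3, h5, h6, h7⟩ a b c => ?_⟩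
  have key (a b : Fin 8) : σ (a ^^^ b) = σ a ^^^ σ b ^^^ σ 0 := by
    fin_cases a <;> fin_cases b <;>
      simp only [h3, h5, h6, h7, Fin.zero_eta, Fin.mk_one, Fin.isValue, Fin.reduceFinMk,
        Fin.reduceXor, fin8_xor_comm, fin8_xor_left_comm, fin8_xor_self, fin8_xor_zero,
        fin8_zero_xor, fin8_xor_cancel] <;>
      apply fin8_xor_left_comm
  simp only [key, fin8_xor_assoc, fin8_xor_self, fin8_xor_zero]

end Affine

section Search

/-- The codes of the powers of `shiftPerm`. -/
def shiftCodes : List ℕ :=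
  [2463175, 4376251, 3657412, 6715324, 7521643, 5142736, 1234567]

theorem shiftCodes_eq :
    shiftCodes = (List.range 7).map fun i => permCode (shiftPerm ^ (i + 1)) := by
  decide +kernel

/-- Two exchanges `x`, `y`, given by their codes, for which some word `cⁱ x cʲ y` with
`c = shiftPerm` has a three-cycle as its `20`th power. -/
def yieldsThreeCycle (x y : ℕ) : Bool :=
  shiftCodes.any fun c => shiftCodes.any fun d =>
    movedCount (pow20Code (mulCode (mulCode c x) (mulCode d y))) = 3

/-- The codes of the permutations interchanging `0` and `1`. -/
def exchangeCodes : List ℕ :=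
  [2, 3, 4, 5, 6, 7].permutations'.map fun l => l.foldl (fun p d => 10 * p + d) 10

theorem permCode_mem_exchangeCodes {σ : Equiv.Perm (Fin 8)} (h0 : σ 0 = 1) (h1 : σ 1 = 0) :
    permCode σ ∈ exchangeCodes := by
  refine List.mem_map.2
    ⟨[σ 2, σ 3, σ 4, σ 5, σ 6, σ 7].map Fin.val, List.mem_permutations'.2 ?_, ?_⟩
  · have hperm := (Equiv.Perm.map_finRange_perm σ).map Fin.val
    simp only [List.finRange_succ, List.finRange_zero, List.map_cons, List.map_nil] at hperm
    have := hperm.trans (List.Perm.swap 1 0 [2, 3, 4, 5, 6, 7])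
    simpa [h0, h1] using this
  · simp only [permCode, ofDigits8, show σ (Fin.ofNat 8 0) = 1 from h0,
      show σ (Fin.ofNat 8 1) = 0 from h1]
    rfl

theorem exists_isThreeCycle_of_yieldsThreeCycle {G : Subgroup (Equiv.Perm (Fin 8))}
    (hc : shiftPerm ∈ G) {x y : Equiv.Perm (Fin 8)} (hx : x ∈ G) (hy : y ∈ G)
    (h : yieldsThreeCycle (permCode x) (permCode y)) : ∃ g ∈ G, g.IsThreeCycle := by
  simp only [yieldsThreeCycle, shiftCodes_eq, List.any_map, List.any_eq_true, Function.comp_apply,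
    ← permCode_mul, ← permCode_pow_twenty, movedCount_permCode, decide_eq_true_eq,
    card_support_eq_three_iff] at h
  obtain ⟨i, -, j, -, hij⟩ := h
  exact ⟨_, G.pow_mem (G.mul_mem (G.mul_mem (G.pow_mem hc _) hx)
    (G.mul_mem (G.pow_mem hc _) hy)) 20, hij⟩

end Search

section Inversions

/-- The permutations `z ↦ k / z` of the projective line over `𝔽₇` with `k` a nonsquare; they
belong to `PSL(2,7)`. -/
def evenInversions : List (Equiv.Perm (Fin 8)) :=
  [c[0, 1] * c[2, 5] * c[3, 4] * c[6, 7], c[0, 1] * c[2, 3] * c[4, 7] * c[5, 6],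
    c[0, 1] * c[2, 7] * c[3, 6] * c[4, 5]]

/-- The permutations `z ↦ k / z` of the projective line over `𝔽₇` with `k` a nonzero square. -/
def oddInversions : List (Equiv.Perm (Fin 8)) :=
  [c[0, 1] * c[2, 6] * c[3, 5], c[0, 1] * c[2, 4] * c[5, 7], c[0, 1] * c[3, 7] * c[4, 6]]

/-- The codes of `evenInversions`. -/
def evenInversionCodes : List ℕ := [10543276, 10327654, 10765432]

/-- The codes of `oddInversions`. -/
def oddInversionCodes : List ℕ := [10654327, 10432765, 10276543]

theorem map_permCode_evenInversions : evenInversions.map permCode = evenInversionCodes := by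
  decide +kernel

theorem map_permCode_oddInversions : oddInversions.map permCode = oddInversionCodes := by
  decide +kernel

theorem permCode_mem_evenInversionCodes {σ : Equiv.Perm (Fin 8)} :
    permCode σ ∈ evenInversionCodes ↔ σ ∈ evenInversions := by
  rw [← map_permCode_evenInversions, List.mem_map_of_injective permCode_injective]

theorem permCode_mem_oddInversionCodes {σ : Equiv.Perm (Fin 8)} :
    permCode σ ∈ oddInversionCodes ↔ σ ∈ oddInversions := by
  rw [← map_permCode_oddInversions, List.mem_map_of_injective permCode_injective]

theorem exists_word_eq_evenInversionCode : ∀ p ∈ evenInversionCodes ++ oddInversionCodes,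
    ∀ q ∈ evenInversionCodes, ∃ c ∈ shiftCodes, ∃ d ∈ shiftCodes,
      mulCode c (mulCode p (mulCode d (mulCode p c))) = q := by
  decide +kernel

theorem mem_of_mem_evenInversions {G : Subgroup (Equiv.Perm (Fin 8))} (hc : shiftPerm ∈ G)
    {x y : Equiv.Perm (Fin 8)} (hxG : x ∈ G) (hx : x ∈ evenInversions ++ oddInversions)
    (hy : y ∈ evenInversions) : y ∈ G := by
  rw [← permCode_mem_evenInversionCodes] at hy
  rw [List.mem_append, ← permCode_mem_evenInversionCodes, ← permCode_mem_oddInversionCodes,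
    ← List.mem_append] at hx
  obtain ⟨c, hcc, d, hdc, h⟩ := exists_word_eq_evenInversionCode _ hx _ hy
  simp only [shiftCodes_eq, List.mem_map] at hcc hdc
  obtain ⟨⟨i, -, rfl⟩, j, -, rfl⟩ := And.intro hcc hdc
  simp only [← permCode_mul, permCode_injective.eq_iff] at h
  have hpow (n : ℕ) := G.pow_mem hc n
  exact h ▸ G.mul_mem (hpow _) (G.mul_mem hxG (G.mul_mem (hpow _) (G.mul_mem hxG (hpow _))))

end Inversions

section ExchangeSearch

/-- The dilation `z ↦ 3 z` of the projective line over `𝔽₇`. It normalizes the group generated by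
`shiftPerm` and `PSL(2,7)`, but not `agl32`. -/
def scalePerm : Equiv.Perm (Fin 8) := c[2, 3, 4, 5, 6, 7]

/-- The test for `agl32` on codes. -/
def isAffineCode (p : ℕ) : Bool :=
  digit8 p 3 = digit8 p 0 ^^^ digit8 p 1 ^^^ digit8 p 2 ∧
    digit8 p 5 = digit8 p 0 ^^^ digit8 p 1 ^^^ digit8 p 4 ∧
    digit8 p 6 = digit8 p 0 ^^^ digit8 p 2 ^^^ digit8 p 4 ∧
    digit8 p 7 = digit8 p 1 ^^^ digit8 p 2 ^^^ digit8 p 4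

/-- The test for the conjugate of `agl32` by `scalePerm` on codes. -/
def isConjAffineCode (p : ℕ) : Bool := isAffineCode (mulCode 1723456 (mulCode p 1345672))

theorem isAffineCode_permCode {σ : Equiv.Perm (Fin 8)} :
    isAffineCode (permCode σ) ↔ σ ∈ agl32 := by
  have xor_val (x y : Fin 8) : (x ^^^ y).val = x.val ^^^ y.val := by decide +revert
  have h := digit8_permCode σ
  simp only [isAffineCode, decide_eq_true_eq, mem_agl32_iff, Fin.ext_iff, xor_val, ← h]
  rfl

theorem isConjAffineCode_permCode {σ : Equiv.Perm (Fin 8)} :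
    isConjAffineCode (permCode σ) ↔ scalePerm⁻¹ * (σ * scalePerm) ∈ agl32 := by
  have h : permCode scalePerm⁻¹ = 1723456 ∧ permCode scalePerm = 1345672 := by decide +kernel
  rw [isConjAffineCode, ← h.1, ← h.2, ← permCode_mul, ← permCode_mul, isAffineCode_permCode]

/-- The codes of the exchanges generating together with `shiftPerm` a group of affine maps or of
projective transformations. -/
def candidateCodes : List ℕ :=
  exchangeCodes.filter fun p => isAffineCode p || isConjAffineCode p ||
    (evenInversionCodes ++ oddInversionCodes).elem p

theorem yieldsThreeCycle_of_notMem_candidateCodes :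
    ∀ p ∈ exchangeCodes, p ∉ candidateCodes → yieldsThreeCycle p p := by
  decide +kernel

theorem exists_common_class_or_yieldsThreeCycle :
    ∀ p ∈ candidateCodes, p ∈ evenInversionCodes ++ oddInversionCodes ∨
      (∀ q ∈ candidateCodes, isAffineCode q ∨ yieldsThreeCycle p q) ∨
      (∀ q ∈ candidateCodes, isConjAffineCode q ∨ yieldsThreeCycle p q) := by
  decide +kernel

theorem exchanges_subset_or_of_no_isThreeCycle {G : Subgroup (Equiv.Perm (Fin 8))}
    (hc : shiftPerm ∈ G) (h3 : ∀ g ∈ G, ¬ g.IsThreeCycle) :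
    exchanges G ⊆ agl32 ∨ (∀ x ∈ exchanges G, scalePerm⁻¹ * (x * scalePerm) ∈ agl32) ∨
      ∀ x ∈ exchanges G, x ∈ evenInversions ++ oddInversions := by
  have no_yield {x y} (hx : x ∈ exchanges G) (hy : y ∈ exchanges G) :
      ¬ yieldsThreeCycle (permCode x) (permCode y) := fun h =>
    let ⟨g, hg, hg3⟩ := exists_isThreeCycle_of_yieldsThreeCycle hc hx.1 hy.1 h
    h3 g hg hg3
  have mem_candidates {x} (hx : x ∈ exchanges G) : permCode x ∈ candidateCodes :=
    not_imp_comm.1 (yieldsThreeCycle_of_notMem_candidateCodes _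
      (permCode_mem_exchangeCodes hx.2.1 hx.2.2)) (no_yield hx hx)
  by_cases hinv : ∀ x ∈ exchanges G, x ∈ evenInversions ++ oddInversions
  · exact Or.inr (Or.inr hinv)
  push Not at hinv
  obtain ⟨x, hx, hxinv⟩ := hinv
  rcases exists_common_class_or_yieldsThreeCycle _ (mem_candidates hx) with h | h | h
  · rw [List.mem_append, permCode_mem_evenInversionCodes, permCode_mem_oddInversionCodes,
      ← List.mem_append] at h
    exact absurd h hxinv
  · exact Or.inl fun y hy => isAffineCode_permCode.1
      ((h _ (mem_candidates hy)).resolve_right (no_yield hx hy))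
  · exact Or.inr <| Or.inl fun y hy => isConjAffineCode_permCode.1
      ((h _ (mem_candidates hy)).resolve_right (no_yield hx hy))

end ExchangeSearch

section Psl27

variable {G : Subgroup (Equiv.Perm (Fin 8))}

theorem psl27_le (h₁ : kleinCyclicPerm ∈ G) (h₂ : kleinSignedPerm ∈ G) (h₃ : kleinDoublePerm ∈ G) :
    psl27 ≤ G :=
  (Subgroup.closure_le G).2 (by rintro _ (rfl | rfl | rfl) <;> assumption)

theorem psl27_le_agl32 : psl27 ≤ agl32 := by
  apply psl27_le <;> rw [mem_agl32_iff] <;> decide +kernel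

theorem psl27_le_conj_agl32 : psl27 ≤ agl32.map (MulAut.conj scalePerm).toMonoidHom := by
  apply psl27_le <;> rw [Subgroup.mem_map_equiv, mem_agl32_iff] <;> decide +kernel

theorem shiftPerm_mem_psl27 : shiftPerm ∈ psl27 := by
  have h : shiftPerm = kleinCyclicPerm ^ 2 * kleinSignedPerm ^ 2 * kleinDoublePerm := by
    decide +kernel
  have hgen {x} (hx : x ∈ ({kleinCyclicPerm, kleinSignedPerm, kleinDoublePerm} : Set _)) :
      x ∈ psl27 := Subgroup.subset_closure hx
  exact h ▸ mul_mem (mul_mem (pow_mem (hgen (by simp)) 2) (pow_mem (hgen (by simp)) 2))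
    (hgen (by simp))

instance isPretransitive_psl27 : MulAction.IsPretransitive psl27 (Fin 8) :=
  isPretransitive_of_shiftPerm_mem shiftPerm_mem_psl27
    ⟨kleinDoublePerm, Subgroup.subset_closure (by simp), by decide⟩

theorem mem_evenInversionCodes_of_isAffineCode : ∀ p ∈ exchangeCodes, isAffineCode p →
    isConjAffineCode p → p ∈ evenInversionCodes := by
  decide +kernel

theorem exchanges_psl27 : exchanges psl27 = {x | x ∈ evenInversions} := by
  have hsub : exchanges psl27 ⊆ {x | x ∈ evenInversions} := fun x hx => by
    have hconj := Subgroup.mem_map_equiv.1 (psl27_le_conj_agl32 hx.1)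
    rw [MulAut.conj_symm_apply, mul_assoc] at hconj
    exact permCode_mem_evenInversionCodes.1 (mem_evenInversionCodes_of_isAffineCode _
      (permCode_mem_exchangeCodes hx.2.1 hx.2.2)
      (isAffineCode_permCode.2 (psl27_le_agl32 hx.1)) (isConjAffineCode_permCode.2 hconj))
  obtain ⟨x, hx⟩ := exchanges_nonempty shiftPerm_mem_psl27
  refine hsub.antisymm fun y hy => ⟨mem_of_mem_evenInversions shiftPerm_mem_psl27 hx.1
    (List.mem_append_left _ (hsub hx)) hy, ?_⟩
  simp only [evenInversions, List.mem_cons, List.not_mem_nil, or_false] at hy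
  rcases hy with rfl | rfl | rfl <;> decide

theorem card_psl27 : Nat.card psl27 = 168 := by
  have hnodup : evenInversions.Nodup := List.Nodup.of_map permCode (by
    rw [map_permCode_evenInversions]
    decide)
  rw [card_eq_mul_ncard_exchanges shiftPerm_mem_psl27, exchanges_psl27, ← List.coe_toFinset,
    Set.ncard_coe_finset, List.toFinset_card_of_nodup hnodup]
  rfl

end Psl27

/-! ### The affine group and the Fano plane -/

section Translations

/-- The group of translations of `𝔽₂³`, a number `< 8` standing for the vector of its binary
digits. -/
def translations : Subgroup (Equiv.Perm (Fin 8)) where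
  carrier := {σ | ∀ a b, σ (a ^^^ b) = σ a ^^^ b}
  one_mem' _ _ := rfl
  mul_mem' hσ hτ a b := by simp only [Equiv.Perm.mul_apply, hτ a b, hσ _ b]
  inv_mem' {σ} hσ a b := by
    rw [Equiv.Perm.inv_eq_iff_eq, hσ]
    simp

theorem translations_apply {σ : Equiv.Perm (Fin 8)} (hσ : σ ∈ translations) (a : Fin 8) :
    σ a = σ 0 ^^^ a := by
  rw [← hσ, fin8_zero_xor]

theorem translations_ext {σ τ : Equiv.Perm (Fin 8)} (hσ : σ ∈ translations)
    (hτ : τ ∈ translations) (h : σ 0 = τ 0) : σ = τ :=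
  Equiv.ext fun a => by rw [translations_apply hσ, translations_apply hτ, h]

/-- Translation by the vector `t`. -/
def xorPerm (t : Fin 8) : Equiv.Perm (Fin 8) :=
  Function.Involutive.toPerm (t ^^^ ·) (fin8_xor_cancel t)

theorem xorPerm_mem_translations (t : Fin 8) : xorPerm t ∈ translations :=
  fun a b => (fin8_xor_assoc t a b).symm

theorem card_translations : Nat.card translations = 8 := by
  have hbij : Function.Bijective fun σ : translations => σ.1 0 :=
    ⟨fun σ τ h => Subtype.ext (translations_ext σ.2 τ.2 h),
      fun t => ⟨⟨xorPerm t, xorPerm_mem_translations t⟩, fin8_xor_zero t⟩⟩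
  rw [Nat.card_eq_of_bijective _ hbij, Nat.card_fin]

theorem translations_le_agl32 : translations ≤ agl32 := fun σ hσ a b c => by
  rw [translations_apply hσ (a ^^^ b ^^^ c), translations_apply hσ a, translations_apply hσ b,
    translations_apply hσ c]
  simp only [fin8_xor_assoc, fin8_xor_left_comm _ (σ 0), fin8_xor_cancel]

theorem conj_mem_translations {σ τ : Equiv.Perm (Fin 8)} (hσ : σ ∈ agl32)
    (hτ : τ ∈ translations) : σ * τ * σ⁻¹ ∈ translations := fun a b => by
  have hinv := agl32.inv_mem hσ a b 0
  rw [fin8_xor_zero] at hinv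
  simp only [Equiv.Perm.mul_apply, hinv]
  rw [fin8_xor_assoc, hτ, ← fin8_xor_assoc, hσ]
  simp

variable {G : Subgroup (Equiv.Perm (Fin 8))}

theorem translations_le_of_mem (hc : shiftPerm ∈ G) {σ : Equiv.Perm (Fin 8)} (hσG : σ ∈ G)
    (hσ : σ ∈ translations) (hσ1 : σ ≠ 1) : translations ≤ G := fun τ hτ => by
  have hσ0 : σ 0 ≠ 0 := fun h => hσ1 (translations_ext hσ (one_mem _) h)
  by_cases hτ0 : τ 0 = 0
  · exact translations_ext hτ (one_mem _) hτ0 ▸ G.one_mem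
  obtain ⟨n, hn⟩ := exists_shiftPerm_pow_apply_eq hσ0 hτ0
  have hpow := psl27_le_agl32 (pow_mem shiftPerm_mem_psl27 n)
  have hinv : (shiftPerm ^ (n : ℕ))⁻¹ 0 = 0 := by
    rw [Equiv.Perm.inv_eq_iff_eq, shiftPerm_pow_apply_zero]
  have : τ = shiftPerm ^ (n : ℕ) * σ * (shiftPerm ^ (n : ℕ))⁻¹ := by
    refine translations_ext hτ (conj_mem_translations hpow hσ) ?_
    rw [Equiv.Perm.mul_apply, Equiv.Perm.mul_apply, hinv, hn]
  exact this ▸ mul_mem (mul_mem (pow_mem hc _) hσG) (inv_mem (pow_mem hc _))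

theorem disjoint_translations_psl27 : Disjoint translations psl27 := by
  rw [Subgroup.disjoint_def]
  intro σ hσ hσp
  by_contra hσ1
  have hmem : xorPerm 1 ∈ exchanges psl27 :=
    ⟨translations_le_of_mem shiftPerm_mem_psl27 hσp hσ hσ1 (xorPerm_mem_translations 1), by decide⟩
  rw [exchanges_psl27, Set.mem_ofPred_eq, ← permCode_mem_evenInversionCodes] at hmem
  revert hmem
  decide +kernel

theorem card_agl32_le : Nat.card agl32 ≤ 1344 := by
  have hc : shiftPerm ∈ agl32 := psl27_le_agl32 shiftPerm_mem_psl27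
  have := isPretransitive_of_shiftPerm_mem hc
    ⟨xorPerm 1, translations_le_agl32 (xorPerm_mem_translations 1), by decide⟩
  have hsub : permCode '' exchanges agl32 ⊆ (exchangeCodes.filter isAffineCode).toFinset := by
    rintro _ ⟨x, hx, rfl⟩
    rw [List.coe_toFinset]
    exact List.mem_filter.2
      ⟨permCode_mem_exchangeCodes hx.2.1 hx.2.2, isAffineCode_permCode.2 hx.1⟩
  have hlen : (exchangeCodes.filter isAffineCode).length = 24 := by decide +kernel
  have hle := (Set.ncard_le_ncard hsub (Finset.finite_toSet _)).trans
    ((Set.ncard_coe_finset _).trans_le ((List.toFinset_card_le _).trans_eq hlen))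
  rw [Set.ncard_image_of_injective _ permCode_injective] at hle
  rw [card_eq_mul_ncard_exchanges hc]
  omega

end Translations

section WalshSign

/-- The sign `(-1)^(χ·v)`, where `χ` and `v` stand for the vectors in `𝔽₂³` of their binary
digits. -/
def walshSign (χ v : Fin 8) : ℤ := ![1, -1, -1, 1, -1, 1, 1, -1] (χ &&& v)

theorem walshSign_zero_left : ∀ v, walshSign 0 v = 1 := by decide

theorem walshSign_zero_right : ∀ χ, walshSign χ 0 = 1 := by decide

theorem walshSign_mul_self : ∀ χ v, walshSign χ v * walshSign χ v = 1 := by decide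

theorem walshSign_xor_left : ∀ χ ψ v, walshSign (χ ^^^ ψ) v = walshSign χ v * walshSign ψ v := by
  decide +kernel

theorem walshSign_xor_right : ∀ χ v w, walshSign χ (v ^^^ w) = walshSign χ v * walshSign χ w := by
  decide +kernel

theorem walshSign_injective : Function.Injective walshSign := by
  have h : ∀ χ ψ, (∀ v, walshSign χ v = walshSign ψ v) → χ = ψ := by decide +kernel
  exact fun χ ψ hχψ => h χ ψ (congrFun hχψ)

theorem sum_walshSign_mul : ∀ v w, ∑ χ, walshSign χ v * walshSign χ w = if v = w then 8 else 0 := by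
  decide +kernel

theorem exists_eq_walshSign {f : Fin 8 → ℤ} (hf : ∀ v, f v = 1 ∨ f v = -1)
    (hmul : ∀ v w, f (v ^^^ w) = f v * f w) : ∃ χ, f = walshSign χ := by
  have h0 : f 0 = 1 := by
    have := hmul 0 0
    rcases hf 0 with h | h <;> simp_all
  have h3 := hmul 1 2
  have h5 := hmul 1 4
  have h6 := hmul 2 4
  have h7 := hmul 3 4
  rcases hf 1 with h1 | h1 <;> rcases hf 2 with h2 | h2 <;> rcases hf 4 with h4 | h4
  on_goal 1 => use 0
  on_goal 2 => use 4
  on_goal 3 => use 2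
  on_goal 4 => use 6
  on_goal 5 => use 1
  on_goal 6 => use 5
  on_goal 7 => use 3
  on_goal 8 => use 7
  all_goals
    ext v
    fin_cases v <;> simp_all [walshSign]

theorem exists_dual_of_mem_agl32 {σ : Equiv.Perm (Fin 8)} (hσ : σ ∈ agl32) :
    ∃ φ : Fin 8 → Fin 8, Function.Injective φ ∧ (∀ χ ψ, φ (χ ^^^ ψ) = φ χ ^^^ φ ψ) ∧
      ∀ χ v, walshSign χ (σ v) = walshSign χ (σ 0) * walshSign (φ χ) v := by
  have hsign : ∀ χ v, walshSign χ v = 1 ∨ walshSign χ v = -1 := by decide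
  have hex (χ : Fin 8) : ∃ ψ, (fun v => walshSign χ (σ v) * walshSign χ (σ 0)) = walshSign ψ := by
    refine exists_eq_walshSign (fun v => ?_) fun v w => ?_
    · rw [← walshSign_xor_right]
      exact hsign _ _
    · have h := hσ v w 0
      rw [fin8_xor_zero] at h
      simp only [h, walshSign_xor_right]
      ring
  choose φ hφ using hex
  have happ (χ v) : walshSign χ (σ v) = walshSign χ (σ 0) * walshSign (φ χ) v := by
    rw [← congrFun (hφ χ) v, mul_comm (walshSign χ (σ v)), ← mul_assoc, walshSign_mul_self, one_mul]
  have hzero (χ) : walshSign χ (σ 0) = walshSign (φ χ) (σ⁻¹ 0) := by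
    have h := happ χ (σ⁻¹ 0)
    rw [← Equiv.Perm.mul_apply, mul_inv_cancel, Equiv.Perm.one_apply, walshSign_zero_right] at h
    rw [← mul_one (walshSign χ (σ 0)), h, ← mul_assoc, walshSign_mul_self, one_mul]
  refine ⟨φ, fun χ ψ h => walshSign_injective (funext fun w => ?_), fun χ ψ => ?_, happ⟩
  · have h' := happ χ (σ⁻¹ w)
    rwa [hzero, h, ← hzero, ← happ, ← Equiv.Perm.mul_apply, mul_inv_cancel] at h'
  · refine walshSign_injective (funext fun v => ?_)
    simp only [walshSign_xor_left, ← hφ]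
    ring

end WalshSign

section Walsh

variable (K : Type) [Field K]

/-- The Walsh transform of the variables, `∑ v, (-1)^(χ·v) x_v`. -/
def walsh (χ : Fin 8) : RFF K (Fin 8) := ∑ v, (walshSign χ v : K) • Xvar K (Fin 8) v

variable {K}

theorem walsh_ne_zero (χ : Fin 8) : walsh K χ ≠ 0 := fun h => by
  have hind : LinearIndependent K (Xvar K (Fin 8)) :=
    ((MvPolynomial.algebraicIndependent_X (Fin 8) K).map'
      (f := IsScalarTower.toAlgHom K _ (RFF K (Fin 8)))
      (IsFractionRing.injective _ _)).linearIndependent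
  have := Fintype.linearIndependent_iff.1 hind _ h 0
  simp [walshSign_zero_right] at this

theorem permHom_walsh {σ : Equiv.Perm (Fin 8)} {χ ψ : Fin 8} {e : ℤ}
    (h : ∀ v, walshSign χ (σ⁻¹ v) = e * walshSign ψ v) :
    permHom K _ σ (walsh K χ) = (e : K) • walsh K ψ := by
  simp only [walsh, map_sum, map_smul, permHom_Xvar, Finset.smul_sum, smul_smul]
  rw [← Equiv.sum_comp σ⁻¹]
  refine Finset.sum_congr rfl fun v _ => ?_
  rw [h, Int.cast_mul, ← Equiv.Perm.mul_apply, mul_inv_cancel, Equiv.Perm.one_apply]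

theorem sum_smul_walsh (v : Fin 8) :
    ∑ χ, (walshSign χ v : K) • walsh K χ = (8 : K) • Xvar K _ v := by
  have horth (w : Fin 8) : ∑ χ, (walshSign χ v : K) * walshSign χ w = if v = w then 8 else 0 := by
    exact_mod_cast congrArg (Int.cast (R := K)) (sum_walshSign_mul v w)
  simp only [walsh, Finset.smul_sum, smul_smul]
  rw [Finset.sum_comm]
  simp [← Finset.sum_smul, horth]

theorem varDiff_mem_span_walsh [CharZero K] (k : Fin 7) :
    varDiff K k ∈ Submodule.span K (Set.range fun χ : Fin 7 => walsh K χ.succ) := by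
  have h : varDiff K k = (8 : K)⁻¹ • ∑ χ : Fin 7,
      ((walshSign χ.succ k.succ : K) - walshSign χ.succ 0) • walsh K χ.succ := by
    rw [eq_inv_smul_iff₀ (by norm_num), varDiff, smul_sub, ← sum_smul_walsh, ← sum_smul_walsh]
    simp [Fin.sum_univ_succ (n := 7), walshSign_zero_left, sub_smul]
  rw [h]
  exact Submodule.smul_mem _ _ (Submodule.sum_mem _ fun χ _ => Submodule.smul_mem _ _
    (Submodule.subset_span ⟨χ, rfl⟩))

end Walsh

section FanoPlane

variable (K : Type) [Field K]

/-- The product of the Walsh transforms on the line of the Fano plane through `χ` and `ψ`. Affine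
maps permute these products, and translations fix them. -/
def walshLine (χ ψ : Fin 8) : RFF K (Fin 8) := walsh K χ * walsh K ψ * walsh K (χ ^^^ ψ)

/-- The products `walshLine` for the seven lines of the Fano plane. -/
def fanoProduct (i : Fin 7) : RFF K (Fin 8) :=
  walshLine K (![1, 1, 1, 2, 2, 3, 3] i) (![2, 4, 6, 4, 5, 4, 5] i)

variable {K}

theorem fanoProduct_ne_zero (i : Fin 7) : fanoProduct K i ≠ 0 :=
  mul_ne_zero (mul_ne_zero (walsh_ne_zero _) (walsh_ne_zero _)) (walsh_ne_zero _)

theorem exists_fanoProduct_eq {χ ψ : Fin 8} (hχ : χ ≠ 0) (hψ : ψ ≠ 0) (hχψ : χ ≠ ψ) :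
    ∃ i, fanoProduct K i = walshLine K χ ψ := by
  have hline : ∀ χ ψ : Fin 8, χ ≠ 0 → ψ ≠ 0 → χ ≠ ψ → ∃ i : Fin 7,
      ({![1, 1, 1, 2, 2, 3, 3] i, ![2, 4, 6, 4, 5, 4, 5] i,
        ![1, 1, 1, 2, 2, 3, 3] i ^^^ ![2, 4, 6, 4, 5, 4, 5] i} : Multiset (Fin 8)) =
      {χ, ψ, χ ^^^ ψ} := by
    decide +kernel
  obtain ⟨i, hi⟩ := hline χ ψ hχ hψ hχψ
  have := congrArg (fun s => (s.map (walsh K)).prod) hi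
  exact ⟨i, by simpa [fanoProduct, walshLine, mul_assoc] using this⟩

theorem permHom_walshLine {σ : Equiv.Perm (Fin 8)} {χ ψ χ' ψ' : Fin 8}
    (hχ : ∀ v, walshSign χ (σ⁻¹ v) = walshSign χ (σ⁻¹ 0) * walshSign χ' v)
    (hψ : ∀ v, walshSign ψ (σ⁻¹ v) = walshSign ψ (σ⁻¹ 0) * walshSign ψ' v) :
    permHom K _ σ (walshLine K χ ψ) = walshLine K χ' ψ' := by
  have hχψ (v) : walshSign (χ ^^^ ψ) (σ⁻¹ v) =
      walshSign (χ ^^^ ψ) (σ⁻¹ 0) * walshSign (χ' ^^^ ψ') v := by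
    simp only [walshSign_xor_left, hχ v, hψ v]
    ring
  have hsign : (walshSign (χ ^^^ ψ) (σ⁻¹ 0) : K) *
      (walshSign χ (σ⁻¹ 0) * walshSign ψ (σ⁻¹ 0)) = 1 := by
    rw [← Int.cast_mul, ← walshSign_xor_left, ← Int.cast_mul, walshSign_mul_self, Int.cast_one]
  simp only [walshLine, map_mul, permHom_walsh hχ, permHom_walsh hψ, permHom_walsh hχψ,
    smul_mul_smul_comm]
  rw [mul_comm _ (walshSign (χ ^^^ ψ) _ : K), hsign, one_smul]

theorem permHom_fanoProduct_of_mem_translations {σ : Equiv.Perm (Fin 8)} (hσ : σ ∈ translations)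
    (i : Fin 7) : permHom K _ σ (fanoProduct K i) = fanoProduct K i :=
  have h (χ v) : walshSign χ (σ⁻¹ v) = walshSign χ (σ⁻¹ 0) * walshSign χ v := by
    rw [translations_apply (inv_mem hσ), walshSign_xor_right]
  permHom_walshLine (h _) (h _)

theorem exists_permHom_fanoProduct_eq {σ : Equiv.Perm (Fin 8)} (hσ : σ ∈ agl32) (i : Fin 7) :
    ∃ j, permHom K _ σ (fanoProduct K i) = fanoProduct K j := by
  obtain ⟨φ, hφ, hadd, hsign⟩ := exists_dual_of_mem_agl32 (inv_mem hσ)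
  have hφ0 : φ 0 = 0 := by simpa using hadd 0 0
  have hne : ∀ i : Fin 7, ![1, 1, 1, 2, 2, 3, 3] i ≠ (0 : Fin 8) ∧
      ![2, 4, 6, 4, 5, 4, 5] i ≠ (0 : Fin 8) ∧
      ![1, 1, 1, 2, 2, 3, 3] i ≠ (![2, 4, 6, 4, 5, 4, 5] i : Fin 8) := by decide
  obtain ⟨h1, h2, h12⟩ := hne i
  obtain ⟨j, hj⟩ := exists_fanoProduct_eq (K := K) (hφ0 ▸ hφ.ne h1) (hφ0 ▸ hφ.ne h2) (hφ.ne h12)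
  exact ⟨j, hj ▸ permHom_walshLine (hsign _) (hsign _)⟩

end FanoPlane

section FanoDegree

variable {K : Type} [Field K] {E : IntermediateField K (RFF K (Fin 8))}

theorem walshLine_div_walshLine_mem (hE : ∀ i j, fanoProduct K i / fanoProduct K j ∈ E)
    {χ ψ χ' ψ' : Fin 8} (hχ : χ ≠ 0) (hψ : ψ ≠ 0) (hχψ : χ ≠ ψ) (hχ' : χ' ≠ 0) (hψ' : ψ' ≠ 0)
    (hχψ' : χ' ≠ ψ') : walshLine K χ ψ / walshLine K χ' ψ' ∈ E := by
  obtain ⟨i, hi⟩ := exists_fanoProduct_eq (K := K) hχ hψ hχψ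
  obtain ⟨j, hj⟩ := exists_fanoProduct_eq (K := K) hχ' hψ' hχψ'
  exact hi ▸ hj ▸ hE i j

theorem sq_walsh_div_walsh_mem (hE : ∀ i j, fanoProduct K i / fanoProduct K j ∈ E)
    {χ ψ : Fin 8} (hχ : χ ≠ 0) (hψ : ψ ≠ 0) : (walsh K χ / walsh K ψ) ^ 2 ∈ E := by
  have hoff : ∀ χ ψ : Fin 8, ∃ ω, ω ≠ 0 ∧ χ ≠ ω ∧ ψ ≠ ω ∧
      χ ^^^ ω ≠ 0 ∧ ψ ^^^ ω ≠ 0 ∧ χ ≠ ψ ^^^ ω ∧ ψ ≠ χ ^^^ ω := by decide +kernel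
  obtain ⟨ω, hω, hχω, hψω, hχω0, hψω0, hχψω, hψχω⟩ := hoff χ ψ
  have h₁ := walshLine_div_walshLine_mem hE hχ hω hχω hψ hω hψω
  have h₂ := walshLine_div_walshLine_mem hE hχ hψω0 hχψω hψ hχω0 hψχω
  convert mul_mem h₁ h₂ using 1
  simp only [walshLine, fin8_xor_left_comm χ ψ ω]
  field_simp [walsh_ne_zero]

theorem walsh_div_walsh_mem (hE : ∀ i j, fanoProduct K i / fanoProduct K j ∈ E)
    (h₂ : walsh K 2 / walsh K 1 ∈ E) (h₃ : walsh K 3 / walsh K 1 ∈ E)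
    (h₄ : walsh K 4 / walsh K 1 ∈ E) (i : Fin 7) : walsh K i.succ / walsh K 1 ∈ E := by
  have h₁ : walsh K 1 / walsh K 1 ∈ E := by
    rw [div_self (walsh_ne_zero (K := K) 1)]
    exact one_mem E
  have hstep {χ : Fin 8} (hχ : χ ≠ 0) (hχ4 : χ ≠ 4) (h : walsh K χ / walsh K 1 ∈ E) :
      walsh K (χ ^^^ 4) / walsh K 1 ∈ E := by
    have hline := walshLine_div_walshLine_mem hE hχ (ψ := 4) (by decide) hχ4
      (χ' := 1) (ψ' := 2) (by decide) (by decide) (by decide)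
    convert mul_mem hline (div_mem (mul_mem h₂ h₃) (mul_mem h h₄)) using 1
    have h12 : (1 : Fin 8) ^^^ 2 = 3 := by decide
    simp only [walshLine, h12]
    field_simp [walsh_ne_zero]
  fin_cases i
  · exact h₁
  · exact h₂
  · exact h₃
  · exact h₄
  · exact hstep (χ := 1) (by decide) (by decide) h₁
  · exact hstep (χ := 2) (by decide) (by decide) h₂
  · exact hstep (χ := 3) (by decide) (by decide) h₃

theorem rank_le_eight_of_fanoProduct_div_mem [CharZero K]
    (hE : ∀ i j, fanoProduct K i / fanoProduct K j ∈ E)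
    (htop : ∀ B, E ≤ B → diffRatioField K _ ≤ B → B = ⊤) :
    Module.rank E (RFF K (Fin 8)) ≤ (8 : ℕ) := by
  refine rank_le_two_mul_of_sq_mem E (n := 4)
    (sq_walsh_div_walsh_mem hE (χ := 2) (ψ := 1) (by decide) (by decide)) fun E₂ h₂ hmem₂ => ?_
  refine rank_le_two_mul_of_sq_mem E₂ (n := 2)
    (h₂ (sq_walsh_div_walsh_mem hE (χ := 3) (ψ := 1) (by decide) (by decide))) fun E₃ h₃ hmem₃ => ?_
  refine rank_le_two_mul_of_sq_mem E₃ (n := 1)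
    (h₃ (h₂ (sq_walsh_div_walsh_mem hE (χ := 4) (ψ := 1) (by decide) (by decide))))
    fun E₄ h₄ hmem₄ => ?_
  have hwalsh := walsh_div_walsh_mem (fun i j => h₄ (h₃ (h₂ (hE i j)))) (h₄ (h₃ hmem₂))
    (h₄ hmem₃) hmem₄
  have hE₄ : E₄ = ⊤ := htop E₄ ((h₂.trans h₃).trans h₄) <| diffRatioField_le (walsh_ne_zero 1)
    fun k => div_mem_of_mem_span le_rfl hwalsh (Submodule.span_le_restrictScalars K E₄ _
      (varDiff_mem_span_walsh k))
  rw [hE₄, Nat.cast_one]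
  exact (IntermediateField.rank_top ..).le

end FanoDegree

section Rationality

theorem exists_monoidHom_extending_of_isComplement' {Γ M : Type*} [Group Γ] [Monoid M]
    {H N : Subgroup Γ} [N.Normal] (h : H.IsComplement' N) (ρ : H →* M) :
    ∃ ρ' : Γ →* M, (∀ d ∈ N, ρ' d = 1) ∧ (∀ g : H, ρ' g = ρ g) ∧ ∀ g, ∃ g' : H, ρ' g = ρ g' := by
  let q : Γ →* H := h.QuotientMulEquiv.toMonoidHom.comp (QuotientGroup.mk' N)
  refine ⟨ρ.comp q, fun d hd => ?_, fun g => ?_, fun g => ⟨q g, rfl⟩⟩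
  · have hd' : QuotientGroup.mk' N d = 1 := (QuotientGroup.eq_one_iff d).2 hd
    rw [MonoidHom.comp_apply, MonoidHom.comp_apply, hd', map_one, map_one]
  · have hq : q g = g := by
      rw [MonoidHom.comp_apply, MulEquiv.coe_toMonoidHom, ← MulEquiv.eq_symm_apply]
      rfl
    rw [MonoidHom.comp_apply, hq]

variable {K : Type} [Field K] [CharZero K] {α : K}

theorem isRatExt_fixedSub_psl27 (hα : α ^ 2 = α - 2) : IsRatExt K (fixedSub K (Fin 8) psl27) := by
  obtain ⟨ρ, hρ, hcyc, hscalar⟩ := exists_klein_representation (RFF K (Fin 8)) hα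
  refine isRatExt_fixedSub_of_klein (m := 6) (H := ⊤) (N := ⊥) (y := varDiff K) (n := 1)
    (by norm_num) hα ρ hρ hcyc (fun h _ => hscalar h)
    (fun h => varDiff_ne_zero (K := K) (n := 7) 0 (congrFun h 0))
    (fun g k => permHom_varDiff_mem_span (K := K) (n := 7) K g.1 k) ?_ (top_sup_eq _)
    (fun E hE htop => ?_) card_psl27.ge
  · rintro d (rfl : d = 1)
    simp
  · rw [htop E le_rfl (diffRatioField_le (varDiff_ne_zero 0) fun k => hE k 0), Nat.cast_one]
    exact (IntermediateField.rank_top ..).le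

instance normal_translations_subgroupOf_agl32 : (translations.subgroupOf agl32).Normal :=
  ⟨fun _ hτ σ => conj_mem_translations σ.2 hτ⟩

theorem isComplement'_psl27_translations :
    (psl27.subgroupOf agl32).IsComplement' (translations.subgroupOf agl32) := by
  have hdisj : Disjoint (psl27.subgroupOf agl32) (translations.subgroupOf agl32) :=
    (Subgroup.disjoint_def.2 fun hp ht =>
      Subtype.ext (Subgroup.disjoint_def.1 disjoint_translations_psl27 ht hp))
  refine Subgroup.isComplement'_of_card_mul_and_disjoint (le_antisymm ?_ ?_) hdisj
  · rw [← Nat.card_prod]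
    exact Nat.card_le_card_of_injective _ (Subgroup.mul_injective_of_disjoint hdisj)
  · rw [Nat.card_congr (Subgroup.subgroupOfEquivOfLe psl27_le_agl32).toEquiv,
      Nat.card_congr (Subgroup.subgroupOfEquivOfLe translations_le_agl32).toEquiv,
      card_psl27, card_translations]
    exact card_agl32_le

theorem card_agl32 : Nat.card agl32 = 1344 := by
  rw [← isComplement'_psl27_translations.card_mul_card,
    Nat.card_congr (Subgroup.subgroupOfEquivOfLe psl27_le_agl32).toEquiv,
    Nat.card_congr (Subgroup.subgroupOfEquivOfLe translations_le_agl32).toEquiv,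
    card_psl27, card_translations]

theorem isRatExt_fixedSub_agl32 (hα : α ^ 2 = α - 2) : IsRatExt K (fixedSub K (Fin 8) agl32) := by
  obtain ⟨ρ, hρ, ⟨g, hg⟩, hscalar⟩ := exists_klein_representation (RFF K (Fin 8)) hα
  let e := Subgroup.subgroupOfEquivOfLe psl27_le_agl32
  obtain ⟨ρ', htriv, hext, hex⟩ := exists_monoidHom_extending_of_isComplement'
    isComplement'_psl27_translations (ρ.comp e.toMonoidHom)
  refine isRatExt_fixedSub_of_klein (m := 6) (H := psl27.subgroupOf agl32)
    (N := translations.subgroupOf agl32) (y := fanoProduct K) (n := 8)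
    (by norm_num) hα ρ' (fun γ => ?_) ⟨e.symm g, ?_⟩ (fun h hh c hc => ?_)
    (fun h => fanoProduct_ne_zero 0 (congrFun h 0)) (fun γ i => ?_)
    (fun d hd => ⟨htriv d hd, permHom_fanoProduct_of_mem_translations (K := K) hd⟩)
    isComplement'_psl27_translations.sup_eq_top
    (fun E => rank_le_eight_of_fanoProduct_div_mem) card_agl32.ge
  · obtain ⟨γ', h⟩ := hex γ
    exact h ▸ hρ _
  · rw [hext, MonoidHom.comp_apply, MulEquiv.coe_toMonoidHom, e.apply_symm_apply, hg]
  · rw [← Subtype.coe_mk h hh, hext ⟨h, hh⟩] at hc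
    simpa using hscalar _ c hc
  · obtain ⟨j, hj⟩ := exists_permHom_fanoProduct_eq (K := K) γ.2 i
    exact hj ▸ Submodule.subset_span (Set.mem_range_self j)

end Rationality

/-! ### Classification of the unsolvable transitive groups -/

section Subgroups

open MulAction

theorem eq_psl27_of_le {G : Subgroup (Equiv.Perm (Fin 8))} (hc : shiftPerm ∈ G) (hG : G ≤ psl27)
    (hsol : ¬ Group.IsSolvable G) : G = psl27 := by
  refine le_antisymm hG ?_
  by_cases h0 : ∃ g ∈ G, g 0 ≠ 0
  · have := isPretransitive_of_shiftPerm_mem hc h0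
    obtain ⟨x, hx⟩ := exchanges_nonempty hc
    have hxinv : x ∈ exchanges psl27 := exchanges_mono hG hx
    rw [exchanges_psl27] at hxinv
    refine le_of_exchanges_subset shiftPerm_mem_psl27 hc fun y hy => ?_
    rw [exchanges_psl27] at hy
    exact mem_of_mem_evenInversions hc hx.1 (List.mem_append_left _ hxinv) hy
  · push Not at h0
    have hstab : G.subgroupOf psl27 ≤ stabilizer psl27 (0 : Fin 8) := fun g hg => h0 g hg
    have hcard : Nat.card (stabilizer psl27 (0 : Fin 8)) = 21 := by
      have h := (stabilizer psl27 (0 : Fin 8)).card_mul_index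
      rw [index_stabilizer_of_transitive, card_psl27, Nat.card_fin] at h
      omega
    have hdvd : Nat.card G ∣ 21 := by
      rw [← hcard, ← Nat.card_congr (Subgroup.subgroupOfEquivOfLe hG).toEquiv]
      exact Subgroup.card_dvd_of_le hstab
    have h21 : Squarefree 21 := by decide +kernel
    have : IsZGroup G := IsZGroup.of_squarefree (h21.squarefree_of_dvd hdvd)
    exact (hsol inferInstance).elim

/-- The codes of the nontrivial translations. -/
def translationCodes : List ℕ :=
  [10325476, 23016745, 32107654, 45670123, 54761032, 67452301, 76543210]

theorem mem_translations_of_permCode_mem {σ : Equiv.Perm (Fin 8)}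
    (h : permCode σ ∈ translationCodes) : σ ∈ translations ∧ σ ≠ 1 := by
  have hcode : ∀ p ∈ translationCodes, ∃ t : Fin 7, permCode (xorPerm t.succ) = p := by
    decide +kernel
  obtain ⟨t, ht⟩ := hcode _ h
  rw [← permCode_injective ht]
  refine ⟨xorPerm_mem_translations _, fun h1 => Fin.succ_ne_zero t ?_⟩
  exact (fin8_xor_zero _).symm.trans (congrArg (· 0) h1)

theorem exists_pow_mem_translationCodes :
    ∀ p ∈ exchangeCodes, isAffineCode p → p ∉ evenInversionCodes → ∃ c ∈ shiftCodes,
      mulCode (mulCode p c) (mulCode p c) ∈ translationCodes ∨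
      mulCode (mulCode p c) (mulCode (mulCode p c) (mulCode p c)) ∈ translationCodes ∨
      mulCode (mulCode (mulCode p c) (mulCode p c)) (mulCode (mulCode p c) (mulCode p c)) ∈
        translationCodes := by
  decide +kernel

variable {G : Subgroup (Equiv.Perm (Fin 8))}

theorem translations_le_of_mem_exchanges (hc : shiftPerm ∈ G) {x : Equiv.Perm (Fin 8)}
    (hx : x ∈ exchanges G) (hxA : x ∈ agl32) (hinv : x ∉ evenInversions) : translations ≤ G := by
  suffices h : ∃ σ ∈ G, permCode σ ∈ translationCodes by
    obtain ⟨σ, hσG, hσ⟩ := h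
    obtain ⟨hσT, hσ1⟩ := mem_translations_of_permCode_mem hσ
    exact translations_le_of_mem hc hσG hσT hσ1
  obtain ⟨c, hcc, h⟩ := exists_pow_mem_translationCodes _
    (permCode_mem_exchangeCodes hx.2.1 hx.2.2) (isAffineCode_permCode.2 hxA)
    (permCode_mem_evenInversionCodes.not.2 hinv)
  simp only [shiftCodes_eq, List.mem_map] at hcc
  obtain ⟨i, -, rfl⟩ := hcc
  simp only [← permCode_mul] at h
  have hmem := mul_mem hx.1 (pow_mem hc (i + 1))
  have hmem2 := mul_mem hmem hmem
  rcases h with h | h | h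
  exacts [⟨_, hmem2, h⟩, ⟨_, mul_mem hmem hmem2, h⟩, ⟨_, mul_mem hmem2 hmem2, h⟩]

instance isSolvable_translations : Group.IsSolvable translations :=
  Group.isSolvable_of_comm fun σ τ => by
  refine Subtype.ext (translations_ext (mul_mem σ.2 τ.2) (mul_mem τ.2 σ.2) ?_)
  rw [Subgroup.coe_mul, Subgroup.coe_mul, Equiv.Perm.mul_apply, Equiv.Perm.mul_apply,
    translations_apply σ.2 (τ.1 0), translations_apply τ.2 (σ.1 0), fin8_xor_comm]

theorem exists_mul_eq_of_mem_agl32 {σ : Equiv.Perm (Fin 8)} (hσ : σ ∈ agl32) :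
    ∃ p ∈ psl27, ∃ t ∈ translations, p * t = σ := by
  obtain ⟨⟨p, t⟩, h⟩ := isComplement'_psl27_translations.2 ⟨σ, hσ⟩
  exact ⟨p, p.2, t, t.2, congrArg Subtype.val h⟩

theorem isSolvable_of_isSolvable_inf_psl27 (hG : G ≤ agl32) (hT : translations ≤ G)
    [Group.IsSolvable (G ⊓ psl27 : Subgroup _)] : Group.IsSolvable G := by
  have : (translations.subgroupOf G).Normal :=
    ⟨fun _ hτ σ => conj_mem_translations (hG σ.2) hτ⟩
  let q := QuotientGroup.mk' (translations.subgroupOf G)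
  have hsurj : Function.Surjective (q.comp (Subgroup.inclusion (inf_le_left (b := psl27)))) := by
    rintro ⟨σ⟩
    obtain ⟨p, hp, t, ht, h⟩ := exists_mul_eq_of_mem_agl32 (hG σ.2)
    have hpG : p ∈ G := by
      rw [eq_mul_inv_of_mul_eq h]
      exact mul_mem σ.2 (inv_mem (hT ht))
    refine ⟨⟨p, hpG, hp⟩, QuotientGroup.eq.2 ?_⟩
    rw [Subgroup.mem_subgroupOf]
    simpa [← h] using ht
  have := Group.isSolvable_of_surjective hsurj
  have : Group.IsSolvable (translations.subgroupOf G) :=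
    Group.isSolvable_of_isSolvable_injective (f := (Subgroup.subgroupOfEquivOfLe hT).toMonoidHom)
      (Subgroup.subgroupOfEquivOfLe hT).injective
  exact Group.isSolvable_of_ker_le_range (translations.subgroupOf G).subtype q (by simp [q])

theorem eq_psl27_or_eq_agl32_of_le [IsPretransitive G (Fin 8)] (hc : shiftPerm ∈ G)
    (hG : G ≤ agl32) (hsol : ¬ Group.IsSolvable G) : G = psl27 ∨ G = agl32 := by
  by_cases hinv : ∀ x ∈ exchanges G, x ∈ evenInversions
  · refine Or.inl (eq_psl27_of_le hc (le_of_exchanges_subset hc shiftPerm_mem_psl27 ?_) hsol)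
    exact fun x hx => (exchanges_psl27.symm ▸ hinv x hx : x ∈ exchanges psl27).1
  · push Not at hinv
    obtain ⟨x, hx, hxinv⟩ := hinv
    have hT := translations_le_of_mem_exchanges hc hx (hG hx.1) hxinv
    have hpsl : G ⊓ psl27 = psl27 := eq_psl27_of_le ⟨hc, shiftPerm_mem_psl27⟩ inf_le_right
      fun _ => hsol (isSolvable_of_isSolvable_inf_psl27 hG hT)
    refine Or.inr (hG.antisymm fun σ hσ => ?_)
    obtain ⟨p, hp, t, ht, rfl⟩ := exists_mul_eq_of_mem_agl32 hσ
    exact mul_mem (inf_eq_right.1 hpsl hp) (hT ht)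

end Subgroups

section Solvability

open MulAction

theorem isSolvable_of_card_dvd {Γ : Type*} [Group Γ] [Finite Γ] (k : ℕ)
    (h : Nat.card Γ ∣ 2 ^ k * 3) : Group.IsSolvable Γ := by
  obtain ⟨P⟩ : Nonempty (Sylow 2 Γ) := inferInstance
  have hP : P.index ∣ 3 := by
    have hcop : Nat.Coprime P.index (2 ^ k) :=
      (((Nat.Prime.coprime_iff_not_dvd Nat.prime_two).2 P.not_dvd_index).pow_left k).symm
    exact hcop.dvd_of_dvd_mul_left ((Subgroup.index_dvd_card _).trans h)
  have hcard : Nat.card (Equiv.Perm (Γ ⧸ (P : Subgroup Γ))) ∣ 6 := by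
    rw [Nat.card_perm, ← Subgroup.index_eq_card]
    exact Nat.factorial_dvd_factorial (Nat.le_of_dvd three_pos hP)
  have h6 : Squarefree 6 := by decide +kernel
  have : IsZGroup (Equiv.Perm (Γ ⧸ (P : Subgroup Γ))) :=
    IsZGroup.of_squarefree (h6.squarefree_of_dvd hcard)
  have : Group.IsNilpotent P := P.isPGroup'.isNilpotent
  refine Group.isSolvable_of_ker_le_range (P : Subgroup Γ).subtype
    (toPermHom Γ (Γ ⧸ (P : Subgroup Γ))) ?_
  rw [← Subgroup.normalCore_eq_ker, Subgroup.range_subtype]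
  exact Subgroup.normalCore_le _

theorem isSolvable_perm {X : Type*} [Finite X] (h : Nat.card X ≤ 4) :
    Group.IsSolvable (Equiv.Perm X) :=
  isSolvable_of_card_dvd 3 (Nat.card_perm (α := X) ▸ Nat.factorial_dvd_factorial h)

theorem isSolvable_pi {ι : Type*} [Finite ι] {H : ι → Type*} [∀ i, Group (H i)]
    [∀ i, Group.IsSolvable (H i)] : Group.IsSolvable (∀ i, H i) := by
  have := Fintype.ofFinite ι
  choose n hn using fun i => Group.IsSolvable.solvable (G := H i)
  refine ⟨⟨Finset.univ.sup n, eq_bot_iff.2 fun x hx => Subgroup.mem_bot.2 (funext fun i => ?_)⟩⟩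
  have hxi := map_derivedSeries_le_derivedSeries (Pi.evalMonoidHom H i) _
    (Subgroup.mem_map_of_mem _ hx)
  simpa [hn i] using derivedSeries_antitone (H i) (Finset.le_sup (Finset.mem_univ i)) hxi

variable {Γ X : Type*} [Group Γ] [MulAction Γ X]

theorem isSolvable_of_equivariant [FaithfulSMul Γ X] {Q : Type*} [Finite Q] [MulAction Γ Q]
    (π : X →[Γ] Q) [Group.IsSolvable (Equiv.Perm Q)]
    [∀ q, Group.IsSolvable (Equiv.Perm {x // π x = q})] : Group.IsSolvable Γ := by
  let N := (toPermHom Γ Q).ker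
  have hN (g : N) (x : X) : π (g • x) = π x := by
    rw [Subgroup.smul_def, map_smul]
    exact Equiv.congr_fun g.2 (π x)
  let f : N →* ∀ q, Equiv.Perm {x // π x = q} :=
    { toFun g q := (toPerm g).subtypePerm fun x => by rw [toPerm_apply, hN]
      map_one' := by ext; simp
      map_mul' _ _ := by ext; exact mul_smul _ _ _ }
  have hf : Function.Injective f := fun a b hab => Subtype.ext <| FaithfulSMul.eq_of_smul_eq_smul
    fun x => congrArg Subtype.val (Equiv.congr_fun (congrFun hab (π x)) ⟨x, rfl⟩)
  have : Group.IsSolvable (∀ q, Equiv.Perm {x // π x = q}) := isSolvable_pi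
  have : Group.IsSolvable N := Group.isSolvable_of_isSolvable_injective hf
  exact Group.isSolvable_of_ker_le_range N.subtype (toPermHom Γ Q) N.range_subtype.ge

open scoped Pointwise

theorem exists_orbitMap_of_isBlock [IsPretransitive Γ X] {B : Set X} (hB : IsBlock Γ B)
    (hne : B.Nonempty) : ∃ π : X →[Γ] orbit Γ B, ∀ x q, π x = q ↔ x ∈ q.1 := by
  have exists_mem (x : X) : ∃ q : orbit Γ B, x ∈ q.1 := by
    obtain ⟨b, hb⟩ := hne
    obtain ⟨g, rfl⟩ := exists_smul_eq Γ b x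
    exact ⟨⟨g • B, g, rfl⟩, Set.smul_mem_smul_set hb⟩
  have eq_of_mem {x : X} {q r : orbit Γ B} (hq : x ∈ q.1) (hr : x ∈ r.1) : q = r := by
    obtain ⟨_, g, rfl⟩ := q
    obtain ⟨_, h, rfl⟩ := r
    by_contra hqr
    exact Set.disjoint_left.1 (hB fun h' => hqr (Subtype.ext h')) hq hr
  choose π hπ using exists_mem
  exact ⟨⟨π, fun g x => eq_of_mem (hπ _) (Set.smul_mem_smul_set (hπ x))⟩,
    fun x q => ⟨fun h => h ▸ hπ x, eq_of_mem (hπ x)⟩⟩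

theorem isPreprimitive_of_not_isSolvable [FaithfulSMul Γ X] [IsPretransitive Γ X] [Finite X]
    (hX : Nat.card X < 10) (hsol : ¬ Group.IsSolvable Γ) : IsPreprimitive Γ X := by
  refine ⟨fun {B} hB => ?_⟩
  by_contra hnt
  obtain ⟨hns, hnu⟩ := not_or.1 hnt
  have hne : B.Nonempty := (Set.not_subsingleton_iff.1 hns).nonempty
  have hmul := hB.ncard_block_mul_ncard_orbit_eq hne
  have hB1 : 1 < B.ncard := Set.one_lt_ncard_iff_nontrivial.2 (Set.not_subsingleton_iff.1 hns)
  have hBX : B.ncard < Nat.card X := Set.ncard_univ X ▸ Set.ncard_lt_ncard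
    (Set.ssubset_univ_iff.2 hnu)
  have horb1 : 1 < (orbit Γ B).ncard := by
    by_contra! h
    nlinarith
  obtain ⟨π, hπ⟩ := exists_orbitMap_of_isBlock hB hne
  have : Group.IsSolvable (Equiv.Perm (orbit Γ B)) :=
    isSolvable_perm (show (orbit Γ B).ncard ≤ 4 by nlinarith)
  have (q : orbit Γ B) : Group.IsSolvable (Equiv.Perm {x // π x = q}) := by
    obtain ⟨g, hg⟩ := q.2
    refine isSolvable_perm ?_
    rw [Nat.card_congr (Equiv.subtypeEquivRight fun x => hπ x q), ← hg]
    exact (Set.ncard_smul_set g B).trans_le (by nlinarith)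
  exact hsol (isSolvable_of_equivariant π)

end Solvability

section SylowConjugation

open MulAction

theorem not_dvd_index_of_pow_dvd_card {Γ : Type*} [Group Γ] {p k : ℕ} {G : Subgroup Γ}
    (hG : p ^ k ∣ Nat.card G) (hΓ : ¬ p ^ (k + 1) ∣ Nat.card Γ) : ¬ p ∣ G.index := fun h =>
  hΓ (G.card_mul_index ▸ pow_succ p k ▸ mul_dvd_mul hG h)

theorem exists_conj_mem_of_not_dvd_index {Γ : Type*} [Group Γ] [Finite Γ] {p : ℕ} [Fact p.Prime]
    {G : Subgroup Γ} (hG : ¬ p ∣ G.index) {σ : Γ} (hσ : IsPGroup p (Subgroup.zpowers σ)) :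
    ∃ τ : Γ, τ * σ * τ⁻¹ ∈ G := by
  obtain ⟨P⟩ : Nonempty (Sylow p G) := inferInstance
  have hindex : ¬ p ∣ (P.map G.subtype).index := by
    rw [Subgroup.index_map_subtype]
    exact Nat.Prime.not_dvd_mul Fact.out P.not_dvd_index hG
  let S : Sylow p Γ := (P.isPGroup'.map G.subtype).toSylow hindex
  obtain ⟨Q, hQ⟩ := hσ.exists_le_sylow
  obtain ⟨τ, hτ⟩ := exists_smul_eq Γ Q S
  have hmem : τ * σ * τ⁻¹ ∈ S := by
    rw [← hτ]
    exact Subgroup.smul_mem_pointwise_smul σ (MulAut.conj τ) _ (hQ (Subgroup.mem_zpowers σ))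
  exact ⟨τ, Subgroup.map_subtype_le _ hmem⟩

theorem isPGroup_zpowers_of_orderOf_eq {Γ : Type*} [Group Γ] {p : ℕ} {σ : Γ}
    (hσ : orderOf σ = p) : IsPGroup p (Subgroup.zpowers σ) :=
  IsPGroup.of_card (n := 1) (by rw [Nat.card_zpowers, hσ, pow_one])

variable {G : Subgroup (Equiv.Perm (Fin 8))}

theorem card_perm_fin8 : Nat.card (Equiv.Perm (Fin 8)) = 40320 := by
  rw [Nat.card_perm, Nat.card_fin]
  rfl

theorem exists_isThreeCycle_mem_of_nine_dvd (h9 : 9 ∣ Nat.card G) :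
    ∃ g ∈ G, g.IsThreeCycle := by
  have hindex : ¬ 3 ∣ G.index :=
    not_dvd_index_of_pow_dvd_card (k := 2) h9 (by rw [card_perm_fin8]; decide)
  have hσ : (c[0, 1, 2] : Equiv.Perm (Fin 8)).IsThreeCycle := by
    rw [← card_support_eq_three_iff]
    decide
  obtain ⟨τ, hτ⟩ := exists_conj_mem_of_not_dvd_index hindex
    (isPGroup_zpowers_of_orderOf_eq hσ.orderOf)
  exact ⟨_, hτ, by rwa [Equiv.Perm.IsThreeCycle, Equiv.Perm.cycleType_conj]⟩

theorem exists_shiftPerm_mem_map_conj (h7 : 7 ∣ Nat.card G) :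
    ∃ τ, shiftPerm ∈ G.map (MulAut.conj τ).toMonoidHom := by
  have : Fact (Nat.Prime 7) := ⟨by norm_num⟩
  have hindex : ¬ 7 ∣ G.index :=
    not_dvd_index_of_pow_dvd_card (k := 1) (by rwa [pow_one]) (by rw [card_perm_fin8]; decide)
  have hσ : orderOf shiftPerm = 7 := orderOf_eq_prime (by decide +kernel) (by decide +kernel)
  obtain ⟨τ, hτ⟩ := exists_conj_mem_of_not_dvd_index hindex (isPGroup_zpowers_of_orderOf_eq hσ)
  exact ⟨τ⁻¹, _, hτ, by simp [mul_assoc]⟩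

theorem seven_dvd_card_of_five_dvd_card (hG : IsPreprimitive G (Fin 8)) (h5 : 5 ∣ Nat.card G) :
    7 ∣ Nat.card G := by
  have : Fact (Nat.Prime 5) := ⟨Nat.prime_five⟩
  obtain ⟨g, hg⟩ := exists_prime_orderOf_dvd_card' (G := G) 5 h5
  have horder : orderOf g.1 = 5 := by rw [Subgroup.orderOf_coe, hg]
  have hcycle : g.1.IsCycle := Equiv.Perm.isCycle_of_prime_order'
    (by rw [horder]; exact Nat.prime_five) (by simp [horder])
  have hfix : (g.1.support : Set (Fin 8))ᶜ.ncard = 3 := by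
    have := Set.ncard_add_ncard_compl (g.1.support : Set (Fin 8))
    rw [Set.ncard_coe_finset, ← hcycle.orderOf, horder, Nat.card_fin] at this
    omega
  have h2 := hG.is_two_pretransitive (n := 2) (by rw [hfix]) (by simp)
    (Equiv.Perm.isPretransitive_of_isCycle_mem hcycle g.2)
  have hpair := h2.index_of_fixingSubgroup_mul (Set.ncard_pair (zero_ne_one (α := Fin 8)))
  have hfact : Nat.factorial 8 = 56 * Nat.factorial 6 := rfl
  rw [Nat.card_fin, hfact, Nat.mul_left_inj (Nat.factorial_ne_zero 6)] at hpair
  exact (by rw [hpair]; decide : 7 ∣ _).trans (Subgroup.index_dvd_card _)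

theorem seven_dvd_card_of_no_isThreeCycle (hG : IsPreprimitive G (Fin 8))
    (hsol : ¬ Group.IsSolvable G) (h3 : ∀ g ∈ G, ¬ g.IsThreeCycle) : 7 ∣ Nat.card G := by
  have h9 : ¬ 9 ∣ Nat.card G := fun h =>
    let ⟨g, hg, hg3⟩ := exists_isThreeCycle_mem_of_nine_dvd h
    h3 g hg hg3
  by_contra h7
  have h5 := mt (seven_dvd_card_of_five_dvd_card hG) h7
  have hcop : (Nat.card G).Coprime (5 * 7) :=
    ((Nat.Prime.coprime_iff_not_dvd (by norm_num)).2 h5).symm.mul_right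
      ((Nat.Prime.coprime_iff_not_dvd (by norm_num)).2 h7).symm
  have hdvd40320 : Nat.card G ∣ 40320 := card_perm_fin8 ▸ G.card_subgroup_dvd_card
  have hdvd : Nat.card G ∣ 1152 := hcop.dvd_of_dvd_mul_right hdvd40320
  have hdiv : ∀ n ∈ Nat.divisors 1152, ¬ 9 ∣ n → n ∣ 2 ^ 7 * 3 := by decide +kernel
  exact hsol (isSolvable_of_card_dvd 7 (hdiv _ (Nat.mem_divisors.2 ⟨hdvd, by norm_num⟩) h9))

end SylowConjugation

section ProjectiveLine

open Matrix OnePoint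

theorem ker_toPermHom_onePoint (F : Type*) [Field F] [DecidableEq F] :
    (MulAction.toPermHom (GL (Fin 2) F) (OnePoint F)).ker = Subgroup.center (GL (Fin 2) F) := by
  ext g
  have hdet := g.det_ne_zero
  rw [det_fin_two] at hdet
  rw [GeneralLinearGroup.mem_center_iff_val_mem_range_scalar, MonoidHom.mem_ker]
  constructor
  · intro h
    have hfix (p : OnePoint F) : g • p = p := Equiv.congr_fun h p
    have hc : g 1 0 = 0 := smul_infty_eq_self_iff.1 (hfix ∞)
    have hd : g 1 1 ≠ 0 := fun hd => hdet (by rw [hc, hd]; ring)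
    have haff (z : F) : g 0 0 * z + g 0 1 = z * g 1 1 := by
      have hz := hfix z
      rw [smul_some_eq_ite, hc, zero_mul, zero_add, if_neg hd] at hz
      exact (div_eq_iff hd).1 (coe_injective hz)
    have hb : g 0 1 = 0 := by linear_combination haff 0
    have ha : g 0 0 = g 1 1 := by linear_combination haff 1 - haff 0
    refine ⟨g 1 1, ?_⟩
    ext i j
    fin_cases i <;> fin_cases j <;> simp [hb, hc, ha]
  · rintro ⟨a, ha⟩
    have hentry (i j : Fin 2) : g i j = scalar (Fin 2) a i j := congrFun₂ ha.symm i j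
    have ha0 : a ≠ 0 := by
      rintro rfl
      simp [hentry] at hdet
    refine Equiv.ext fun p => ?_
    change g • p = p
    cases p with
    | infty => exact smul_infty_eq_self_iff.2 (by simp [hentry])
    | coe z => simp [smul_some_eq_ite, hentry, ha0]

theorem card_center_GL (n R : Type*) [Fintype n] [DecidableEq n] [Nonempty n] [CommRing R] :
    Nat.card (Subgroup.center (GL n R)) = Nat.card Rˣ := by
  have hinj : Function.Injective (GeneralLinearGroup.scalar n : Rˣ →* GL n R) :=
    Units.map_injective fun _ _ h => scalar_inj.1 h
  rw [GeneralLinearGroup.center_eq_range_scalar,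
    Nat.card_congr (MonoidHom.ofInjective hinj).symm.toEquiv]

instance fact_prime_seven : Fact (Nat.Prime 7) := ⟨by norm_num⟩

theorem card_PGL27 : Nat.card PGL27 = 336 := by
  have hcenter : Nat.card (Subgroup.center (GL (Fin 2) (ZMod 7))) = 6 := by
    rw [card_center_GL, Nat.card_eq_fintype_card, ZMod.card_units]
  have hGL : Nat.card (GL (Fin 2) (ZMod 7)) = 2016 := by
    rw [card_GL_field, Fin.prod_univ_two, ZMod.card]
    rfl
  have h := (Subgroup.center (GL (Fin 2) (ZMod 7))).index_mul_card
  rw [hcenter, hGL] at h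
  rw [← Subgroup.index_eq_card]
  omega

/-- The labelling of the points of the projective line over `𝔽₇` by `0, …, 7` for which
`shiftPerm` is the translation `z ↦ z + 1`. -/
def projectiveLineEquiv : OnePoint (ZMod 7) ≃ Fin 8 where
  toFun p := p.elim 0 ![1, 2, 4, 3, 6, 7, 5]
  invFun := ![∞, (0 : ZMod 7), (1 : ZMod 7), (3 : ZMod 7), (2 : ZMod 7), (6 : ZMod 7), (4 : ZMod 7),
    (5 : ZMod 7)]
  left_inv p := by
    cases p with
    | infty => rfl
    | coe z => fin_cases z <;> rfl
  right_inv i := by fin_cases i <;> rfl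

/-- The action of `GL(2, 7)` on the points of the projective line over `𝔽₇`. -/
def projectiveHom : GL (Fin 2) (ZMod 7) →* Equiv.Perm (Fin 8) :=
  projectiveLineEquiv.permCongrHom.toMonoidHom.comp (MulAction.toPermHom _ (OnePoint (ZMod 7)))

/-- The group `PGL(2,7)` as a subgroup of `S₈`. -/
def pgl27 : Subgroup (Equiv.Perm (Fin 8)) := projectiveHom.range

theorem ker_projectiveHom : projectiveHom.ker = Subgroup.center (GL (Fin 2) (ZMod 7)) := by
  rw [← ker_toPermHom_onePoint]
  exact MonoidHom.ker_mulEquiv_comp _ projectiveLineEquiv.permCongrHom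

/-- The faithful action of `PGL27` on the projective line, as an isomorphism with its image. -/
def equivPgl27 : PGL27 ≃* pgl27 :=
  (QuotientGroup.quotientMulEquivOfEq ker_projectiveHom.symm).trans
    (QuotientGroup.quotientKerEquivRange projectiveHom)

theorem card_pgl27 : Nat.card pgl27 = 336 :=
  (Nat.card_congr equivPgl27.symm.toEquiv).trans card_PGL27

theorem mem_pgl27_of_forall (a b c d : ZMod 7) {σ : Equiv.Perm (Fin 8)} (hdet : a * d - b * c ≠ 0)
    (h0 : σ 0 = projectiveLineEquiv (if c = 0 then ∞ else ↑(a / c)))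
    (h : ∀ z : ZMod 7, σ (projectiveLineEquiv z) =
      projectiveLineEquiv (if c * z + d = 0 then ∞ else ↑((a * z + b) / (c * z + d)))) :
    σ ∈ pgl27 := by
  let g := GeneralLinearGroup.mkOfDetNeZero !![a, b; c, d] (by rwa [det_fin_two_of])
  refine ⟨g, Equiv.ext fun i => ?_⟩
  obtain ⟨p, rfl⟩ := projectiveLineEquiv.surjective i
  have hg : projectiveHom g (projectiveLineEquiv p) = projectiveLineEquiv (g • p) := by
    simp [projectiveHom]
  rw [hg]
  cases p with
  | infty => exact (congrArg _ (smul_infty_eq_ite g)).trans h0.symm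
  | coe z => exact (congrArg _ smul_some_eq_ite).trans (h z).symm

theorem shiftPerm_mem_pgl27 : shiftPerm ∈ pgl27 :=
  mem_pgl27_of_forall 1 1 0 1 (by decide) (by decide +kernel) (by decide +kernel)

theorem mem_pgl27_of_mem_inversions {σ : Equiv.Perm (Fin 8)}
    (hσ : σ ∈ evenInversions ++ oddInversions) : σ ∈ pgl27 := by
  simp only [evenInversions, oddInversions, List.cons_append, List.nil_append, List.mem_cons,
    List.not_mem_nil, or_false] at hσ
  rcases hσ with rfl | rfl | rfl | rfl | rfl | rfl
  · exact mem_pgl27_of_forall 0 6 1 0 (by decide) (by decide +kernel) (by decide +kernel)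
  · exact mem_pgl27_of_forall 0 3 1 0 (by decide) (by decide +kernel) (by decide +kernel)
  · exact mem_pgl27_of_forall 0 5 1 0 (by decide) (by decide +kernel) (by decide +kernel)
  · exact mem_pgl27_of_forall 0 4 1 0 (by decide) (by decide +kernel) (by decide +kernel)
  · exact mem_pgl27_of_forall 0 2 1 0 (by decide) (by decide +kernel) (by decide +kernel)
  · exact mem_pgl27_of_forall 0 1 1 0 (by decide) (by decide +kernel) (by decide +kernel)

theorem eq_psl27_or_eq_pgl27_of_exchanges_subset {G : Subgroup (Equiv.Perm (Fin 8))}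
    [MulAction.IsPretransitive G (Fin 8)] (hc : shiftPerm ∈ G)
    (h : ∀ x ∈ exchanges G, x ∈ evenInversions ++ oddInversions) : G = psl27 ∨ G = pgl27 := by
  obtain ⟨x, hx⟩ := exchanges_nonempty hc
  have hpsl : psl27 ≤ G := le_of_exchanges_subset shiftPerm_mem_psl27 hc fun y hy => by
    rw [exchanges_psl27] at hy
    exact mem_of_mem_evenInversions hc hx.1 (h x hx) hy
  have hpgl : G ≤ pgl27 := le_of_exchanges_subset hc shiftPerm_mem_pgl27 fun y hy =>
    mem_pgl27_of_mem_inversions (h y hy)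
  obtain ⟨m, hm⟩ := Subgroup.card_dvd_of_le hpsl
  have hm2 : m ∣ 2 := by
    have := Subgroup.card_dvd_of_le hpgl
    rw [hm, card_pgl27, card_psl27] at this
    exact Nat.dvd_of_mul_dvd_mul_left (k := 168) (by norm_num) this
  rcases (Nat.dvd_prime Nat.prime_two).1 hm2 with rfl | rfl
  · exact Or.inl (Subgroup.eq_of_le_of_card_ge hpsl (by rw [hm, mul_one])).symm
  · exact Or.inr (Subgroup.eq_of_le_of_card_ge hpgl (by rw [hm, card_psl27, card_pgl27]))

end ProjectiveLine

section Conjugation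

theorem map_conj_map_conj {Γ : Type*} [Group Γ] (H : Subgroup Γ) (g h : Γ) :
    (H.map (MulAut.conj h).toMonoidHom).map (MulAut.conj g).toMonoidHom =
      H.map (MulAut.conj (g * h)).toMonoidHom := by
  rw [Subgroup.map_map, map_mul]
  rfl

theorem map_conj_one {Γ : Type*} [Group Γ] (H : Subgroup Γ) :
    H.map (MulAut.conj 1).toMonoidHom = H := by
  rw [map_one]
  exact H.map_id

theorem not_isSolvable_map_conj {Γ : Type*} [Group Γ] {H : Subgroup Γ}
    (hsol : ¬ Group.IsSolvable H) (g : Γ) :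
    ¬ Group.IsSolvable (H.map (MulAut.conj g).toMonoidHom) := by
  intro _
  have e : H ≃* H.map (MulAut.conj g).toMonoidHom :=
    H.equivMapOfInjective _ (MulAut.conj g).injective
  exact hsol (Group.isSolvable_of_isSolvable_injective (f := e.toMonoidHom) e.injective)

variable {X : Type*} {G : Subgroup (Equiv.Perm X)}

theorem isPretransitive_map_conj [MulAction.IsPretransitive G X] (τ : Equiv.Perm X) :
    MulAction.IsPretransitive (G.map (MulAut.conj τ).toMonoidHom) X := by
  refine ⟨fun i j => ?_⟩
  obtain ⟨g, hg⟩ := MulAction.exists_smul_eq G (τ⁻¹ i) (τ⁻¹ j)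
  refine ⟨⟨_, Subgroup.mem_map_of_mem _ g.2⟩, ?_⟩
  change τ ((g : Equiv.Perm X) (τ⁻¹ i)) = j
  rw [show (g : Equiv.Perm X) (τ⁻¹ i) = τ⁻¹ j from hg]
  exact τ.apply_symm_apply j

theorem not_isThreeCycle_of_mem_map_conj [Fintype X] [DecidableEq X]
    (h3 : ∀ g ∈ G, ¬ g.IsThreeCycle) (τ : Equiv.Perm X) :
    ∀ g ∈ G.map (MulAut.conj τ).toMonoidHom, ¬ g.IsThreeCycle := by
  rintro _ ⟨g, hg, rfl⟩ h
  exact h3 g hg ((Equiv.Perm.cycleType_conj (σ := g) (τ := τ)).symm.trans h)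

theorem isRatExt_fixedSub_of_map_conj {K X : Type} [Field K] {G : Subgroup (Equiv.Perm X)}
    {τ : Equiv.Perm X} (h : IsRatExt K (fixedSub K X (G.map (MulAut.conj τ).toMonoidHom))) :
    IsRatExt K (fixedSub K X G) := by
  have h' := isRatExt_fixedSub_map_conj τ⁻¹ h
  rwa [map_conj_map_conj, inv_mul_cancel, map_conj_one] at h'

end Conjugation

section Classification

variable {G : Subgroup (Equiv.Perm (Fin 8))}

theorem shiftPerm_mem_map_conj_scalePerm_inv (hc : shiftPerm ∈ G) :
    shiftPerm ∈ G.map (MulAut.conj scalePerm⁻¹).toMonoidHom :=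
  ⟨shiftPerm ^ 3, pow_mem hc 3, by decide +kernel⟩

theorem exists_map_conj_eq_of_shiftPerm_mem [MulAction.IsPretransitive G (Fin 8)]
    (hsol : ¬ Group.IsSolvable G) (h3 : ∀ g ∈ G, ¬ g.IsThreeCycle) (hc : shiftPerm ∈ G) :
    ∃ τ, G.map (MulAut.conj τ).toMonoidHom ∈ ({psl27, agl32, pgl27} : Set _) := by
  rcases exchanges_subset_or_of_no_isThreeCycle hc h3 with h | h | h
  · have hle : G ≤ agl32 := le_of_exchanges_subset hc (psl27_le_agl32 shiftPerm_mem_psl27) h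
    exact ⟨1, by
      rw [map_conj_one]
      exact (eq_psl27_or_eq_agl32_of_le hc hle hsol).imp_right Or.inl⟩
  · have hle : G ≤ agl32.map (MulAut.conj scalePerm).toMonoidHom :=
      le_of_exchanges_subset hc (psl27_le_conj_agl32 shiftPerm_mem_psl27) fun x hx =>
        ⟨_, h x hx, by simp [mul_assoc]⟩
    have hle' : G.map (MulAut.conj scalePerm⁻¹).toMonoidHom ≤ agl32 := by
      rintro _ ⟨g, hg, rfl⟩
      obtain ⟨a, ha, rfl⟩ := hle hg
      simpa [mul_assoc] using ha
    have := isPretransitive_map_conj (G := G) scalePerm⁻¹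
    exact ⟨scalePerm⁻¹, (eq_psl27_or_eq_agl32_of_le (shiftPerm_mem_map_conj_scalePerm_inv hc) hle'
      (not_isSolvable_map_conj hsol _)).imp_right Or.inl⟩
  · exact ⟨1, by
      rw [map_conj_one]
      exact (eq_psl27_or_eq_pgl27_of_exchanges_subset hc h).imp_right Or.inr⟩

theorem not_alternatingGroup_le (hA : G ≠ alternatingGroup (Fin 8)) (hS : G ≠ ⊤) :
    ¬ alternatingGroup (Fin 8) ≤ G := by
  intro hle
  have hdvd := Subgroup.index_dvd_of_le hle
  rw [alternatingGroup.index_eq_two] at hdvd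
  rcases (Nat.dvd_prime Nat.prime_two).1 hdvd with h1 | h2
  · exact hS (Subgroup.index_eq_one.1 h1)
  · exact hA (Equiv.Perm.eq_alternatingGroup_of_index_eq_two h2)

theorem exists_map_conj_eq [MulAction.IsPretransitive G (Fin 8)] (hsol : ¬ Group.IsSolvable G)
    (hG : ¬ alternatingGroup (Fin 8) ≤ G) :
    ∃ τ, G.map (MulAut.conj τ).toMonoidHom ∈ ({psl27, agl32, pgl27} : Set _) := by
  have hprim : MulAction.IsPreprimitive G (Fin 8) :=
    isPreprimitive_of_not_isSolvable (by simp) hsol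
  have h3 : ∀ g ∈ G, ¬ g.IsThreeCycle := fun g hg h3g =>
    hG (Equiv.Perm.alternatingGroup_le_of_isPreprimitive_of_isThreeCycle_mem hprim h3g hg)
  obtain ⟨τ, hτ⟩ := exists_shiftPerm_mem_map_conj (seven_dvd_card_of_no_isThreeCycle hprim hsol h3)
  have := isPretransitive_map_conj (G := G) τ
  obtain ⟨σ, hσ⟩ := exists_map_conj_eq_of_shiftPerm_mem (not_isSolvable_map_conj hsol τ)
    (not_isThreeCycle_of_mem_map_conj h3 τ) hτ
  exact ⟨σ * τ, map_conj_map_conj G σ τ ▸ hσ⟩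

end Classification

/-- **Rationality for unsolvable transitive subgroups of `S₈`.** Let `K` be a field containing
`ℚ(√−7)` (i.e. `K` has characteristic zero and `−7` is a square in `K`), and let `G` be an
unsolvable transitive subgroup of `S₈` (acting on `{0,…,7}`) with `G ≠ A₈`, `G ≠ S₈` and `G`
not isomorphic to `PGL(2,7)`. Then `K(x₁,…,x₈)^G` is `K`-rational. -/
theorem rationality_unsolvable_transitive (K : Type) [Field K] [CharZero K]
    (hsqrt : ∃ r : K, r ^ 2 = -7)
    (G : Subgroup (Equiv.Perm (Fin 8)))
    (hunsolv : ¬ IsSolvable G)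
    (htrans : ∀ i j : Fin 8, ∃ σ ∈ G, σ i = j)
    (hA8 : G ≠ alternatingGroup (Fin 8))
    (hS8 : G ≠ ⊤)
    (hPGL : ¬ Nonempty (G ≃* PGL27)) :
    IsRatExt K ↥(fixedSub K (Fin 8) G) := by
  obtain ⟨r, hr⟩ := hsqrt
  have hα : ((1 + r) / 2) ^ 2 = (1 + r) / 2 - 2 := by linear_combination hr / 4
  have : MulAction.IsPretransitive G (Fin 8) := ⟨fun i j =>
    let ⟨σ, hσ, hij⟩ := htrans i j
    ⟨⟨σ, hσ⟩, hij⟩⟩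
  obtain ⟨τ, hτ⟩ := exists_map_conj_eq hunsolv (not_alternatingGroup_le hA8 hS8)
  refine isRatExt_fixedSub_of_map_conj (τ := τ) ?_
  rcases hτ with h | h | h
  · exact h ▸ isRatExt_fixedSub_psl27 hα
  · exact h ▸ isRatExt_fixedSub_agl32 hα
  · refine (hPGL ⟨?_⟩).elim
    exact ((G.equivMapOfInjective _ (MulAut.conj τ).injective).trans
      (MulEquiv.subgroupCongr h)).trans equivPgl27.symm
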